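/- Let G be a polycyclic group. Then G is conjugacy separable. -/

import Mathlib

/-- A group is polycyclic if it has a subnormal series with cyclic factors. -/
def IsPolycyclic (G : Type*) [Group G] : Prop :=
  ∃ (n : ℕ) (s : Fin (n + 1) → Subgroup G),
    s 0 = ⊥ ∧ s (Fin.last n) = ⊤ ∧
    ∀ i : Fin n, s i.castSucc ≤ s i.succ ∧
      ((s i.castSucc).subgroupOf (s i.succ)).Normal ∧
      -- the quotient `s i.succ / s i.castSucc` is cyclic
      ∃ x : s i.succ, (s i.castSucc).subgroupOf (s i.succ) ⊔ Subgroup.zpowers x = ⊤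

/-- A group is conjugacy separable if any two non-conjugate elements remain
non-conjugate in some finite quotient. -/
def ConjugacySeparable (G : Type u) [Group G] : Prop :=
  ∀ a b : G, ¬ IsConj a b →
    ∃ (Q : Type u) (_ : Group Q) (_ : Finite Q) (f : G →* Q),
      Function.Surjective f ∧ ¬ IsConj (f a) (f b)

section
open Filter Ideal Topology nonZeroDivisors NumberField ENNReal

noncomputable section
namespace CS

def zetaSum (K : Type*) [Field K] [NumberField K] (s : ℝ) : ℝ≥0∞ :=
  ∑' I : Ideal (𝓞 K), ENNReal.ofReal ((absNorm I : ℝ) ^ (-s))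

def idealCount (K : Type*) [Field K] [NumberField K] (n : ℕ) : ℝ :=
  (Nat.card {I : Ideal (𝓞 K) // absNorm I = n} : ℝ)

lemma idealCount_summable (K : Type*) [Field K] [NumberField K] {s : ℝ} (hs : 1 < s) :
    LSeriesSummable (fun n => (idealCount K n : ℂ)) s := by
  have hlim : Tendsto (fun n : ℕ ↦ (∑ k ∈ Finset.Icc 1 n, idealCount K k) / (n : ℝ)) atTop
      (𝓝 (dedekindZeta_residue K)) := by
    refine ((Ideal.tendsto_norm_le_div_atTop₀ K).comp tendsto_natCast_atTop_atTop).congr fun n ↦ ?_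
    simp only [idealCount, Function.comp_apply, Nat.cast_le, ← Nat.cast_sum]
    congr
    rw [← add_left_inj 1, ← card_norm_le_eq_card_norm_le_add_one,
      show Finset.Icc 1 n = Finset.Ioc 0 n from Finset.Icc_succ_left_eq_Ioc _ _,
      show 1 = Nat.card {I : Ideal (𝓞 K) // absNorm I = 0} by simp [Ideal.absNorm_eq_zero_iff],
      Finset.sum_Ioc_add_eq_sum_Icc (n.zero_le),
      ← Finset.card_preimage_eq_sum_card_image_eq (fun k _ ↦ finite_setOfPred_absNorm_eq k)]
    simp [Set.coe_eq_subtype]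
  refine LSeriesSummable_of_sum_norm_bigO_and_nonneg (r := 1) ?_ (fun n => Nat.cast_nonneg _)
    zero_le_one (by simpa using hs)
  have := hlim.isBigO_one ℝ
  have h2 := this.mul (Asymptotics.isBigO_refl (fun n : ℕ => (n : ℝ)) atTop)
  refine (h2.congr' ?_ ?_)
  · filter_upwards [eventually_gt_atTop 0] with n hn
    field_simp
  · filter_upwards with n
    simp

lemma zetaSum_eq (K : Type*) [Field K] [NumberField K] (s : ℝ) :
    zetaSum K s = ∑' n : ℕ, ENNReal.ofReal (idealCount K n * (n : ℝ) ^ (-s)) := by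
  unfold zetaSum
  rw [← (Equiv.sigmaFiberEquiv (fun I : Ideal (𝓞 K) => absNorm I)).tsum_eq, ENNReal.tsum_sigma']
  congr 1; ext n
  have : Finite {I : Ideal (𝓞 K) // absNorm I = n} := finite_setOfPred_absNorm_eq n
  have := Fintype.ofFinite {I : Ideal (𝓞 K) // absNorm I = n}
  rw [tsum_fintype]
  rw [Finset.sum_congr rfl (g := fun _ => ENNReal.ofReal ((n : ℝ) ^ (-s)))]
  · simp only [Finset.sum_const, Finset.card_univ, idealCount, Nat.card_eq_fintype_card]
    rw [ENNReal.ofReal_mul (by positivity), ENNReal.ofReal_natCast, nsmul_eq_mul]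
  · rintro ⟨x, hx⟩ _
    simp [Equiv.sigmaFiberEquiv, hx]

lemma zetaSum_toReal (K : Type*) [Field K] [NumberField K] {s : ℝ} (hs : 1 < s) :
    zetaSum K s ≠ ⊤ ∧ ((zetaSum K s).toReal : ℂ) = dedekindZeta K s := by
  have h := idealCount_summable K hs
  have hterm : ∀ n : ℕ, LSeries.term (fun n => (idealCount K n : ℂ)) s n =
      ((idealCount K n * (n : ℝ) ^ (-s) : ℝ) : ℂ) := by
    intro n
    rcases eq_or_ne n 0 with rfl | hn
    · simp [Real.zero_rpow (by linarith : -s ≠ 0)]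
    · rw [LSeries.term_of_ne_zero hn, Complex.ofReal_mul, Complex.ofReal_cpow (by positivity)]
      push_cast
      rw [Complex.cpow_neg]
      rfl
  have hs' : Summable (fun n : ℕ => idealCount K n * (n : ℝ) ^ (-s)) := by
    have : Summable (fun n : ℕ => ((idealCount K n * (n : ℝ) ^ (-s) : ℝ) : ℂ)) := by
      simpa [LSeriesSummable, funext hterm] using h
    exact_mod_cast this
  have hnn : ∀ n : ℕ, 0 ≤ idealCount K n * (n : ℝ) ^ (-s) := fun n => by
    unfold idealCount; positivity
  have he := ENNReal.ofReal_tsum_of_nonneg hnn hs'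
  rw [zetaSum_eq, ← he]
  refine ⟨ENNReal.ofReal_ne_top, ?_⟩
  rw [ENNReal.toReal_ofReal (tsum_nonneg hnn), Complex.ofReal_tsum]
  unfold dedekindZeta LSeries
  congr 1; ext n
  rw [← hterm]
  simp [idealCount]

lemma zetaSum_tendsto (K : Type*) [Field K] [NumberField K] :
    Tendsto (fun s : ℝ => (s - 1) * (zetaSum K s).toReal) (𝓝[>] 1)
      (𝓝 (dedekindZeta_residue K)) := by
  have h := tendsto_sub_one_mul_dedekindZeta_nhdsGT K
  have h2 := (Complex.continuous_re.tendsto _).comp h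
  refine h2.congr' ?_
  filter_upwards [self_mem_nhdsWithin] with s hs
  have := (zetaSum_toReal K hs).2
  simp only [Function.comp]
  rw [← this]
  norm_cast

end CS
end
end

section
open Filter Ideal Topology nonZeroDivisors NumberField ENNReal UniqueFactorizationMonoid

noncomputable section
namespace CS

def wt {K : Type*} [Field K] [NumberField K] (s : ℝ) (I : Ideal (𝓞 K)) : ℝ≥0∞ :=
  ENNReal.ofReal ((absNorm I : ℝ) ^ (-s))

lemma wt_mul {K : Type*} [Field K] [NumberField K] (s : ℝ) (I J : Ideal (𝓞 K)) :
    wt s (I * J) = wt s I * wt s J := by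
  unfold wt
  rw [← ENNReal.ofReal_mul (by positivity), map_mul, Nat.cast_mul,
    Real.mul_rpow (by positivity) (by positivity)]

lemma wt_bot {K : Type*} [Field K] [NumberField K] {s : ℝ} (hs : 1 < s) :
    wt s (⊥ : Ideal (𝓞 K)) = 0 := by
  unfold wt
  simp [Real.zero_rpow (by linarith : -s ≠ 0)]

/-- ideals not divisible by any element of `S` -/
def cop {K : Type*} [Field K] [NumberField K] (S : Set (Ideal (𝓞 K))) : Set (Ideal (𝓞 K)) :=
  {I | I ≠ ⊥ ∧ ∀ P ∈ S, ¬ P ∣ I}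

def zS (K : Type*) [Field K] [NumberField K] (S : Set (Ideal (𝓞 K))) (s : ℝ) : ℝ≥0∞ :=
  ∑' I : Ideal (𝓞 K), (cop S).indicator (wt s) I

lemma zS_le {K : Type*} [Field K] [NumberField K] (S : Set (Ideal (𝓞 K))) (s : ℝ) :
    zS K S s ≤ zetaSum K s :=
  ENNReal.tsum_le_tsum fun I => Set.indicator_le_self _ _ I

lemma zS_empty {K : Type*} [Field K] [NumberField K] {s : ℝ} (hs : 1 < s) :
    zS K ∅ s = zetaSum K s := by
  unfold zS zetaSum
  congr 1; ext I
  by_cases h : I = ⊥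
  · subst h
    rw [Set.indicator_of_notMem (by simp [cop])]
    exact (wt_bot hs).symm
  · rw [Set.indicator_of_mem (by simp [cop, h])]; rfl

lemma wt_prime_le {K : Type*} [Field K] [NumberField K] {s : ℝ} (hs : 1 < s) {P : Ideal (𝓞 K)}
    (hP : P ≠ ⊥) (hP1 : P ≠ ⊤) : wt s P ≤ 2⁻¹ := by
  have h2 : 2 ≤ absNorm P := by
    have h0 : absNorm P ≠ 0 := by rwa [Ne, absNorm_eq_zero_iff]
    have h1 : absNorm P ≠ 1 := by rwa [Ne, absNorm_eq_one_iff]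
    omega
  unfold wt
  have : ENNReal.ofReal (2⁻¹ : ℝ) = 2⁻¹ := by
    rw [ENNReal.ofReal_inv_of_pos (by norm_num)]; simp
  rw [← this]
  apply ENNReal.ofReal_le_ofReal
  have h2' : (2 : ℝ) ≤ absNorm P := by exact_mod_cast h2
  rw [Real.rpow_neg (by positivity)]
  apply inv_anti₀ (by norm_num)
  calc (2 : ℝ) ≤ absNorm P := h2'
    _ = (absNorm P : ℝ) ^ (1 : ℝ) := by simp
    _ ≤ (absNorm P : ℝ) ^ s := Real.rpow_le_rpow_of_exponent_le (by linarith) hs.le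

lemma zS_insert {K : Type*} [Field K] [NumberField K] (S : Set (Ideal (𝓞 K))) {s : ℝ} (hs : 1 < s)
    (P : Ideal (𝓞 K)) (hP : P ≠ ⊥) (hP1 : P ≠ ⊤) :
    zS K S s ≤ 2 * zS K (insert P S) s := by
  classical
  have h1 : zS K S s ≤ zS K (insert P S) s + 2⁻¹ * zS K S s := by
    have hinj : Function.Injective (fun J : Ideal (𝓞 K) => P * J) := mul_right_injective₀ hP
    let f : Ideal (𝓞 K) → ℝ≥0∞ := (cop S ∩ {I | P ∣ I}).indicator (wt s)
    have hf : ∑' I, f I ≤ 2⁻¹ * zS K S s := by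
      rw [← hinj.tsum_eq (f := f), zS, ← ENNReal.tsum_mul_left]
      · refine ENNReal.tsum_le_tsum fun J => ?_
        by_cases hm : P * J ∈ cop S ∩ {I | P ∣ I}
        · simp only [f]
          rw [Set.indicator_of_mem hm, wt_mul, Set.indicator_of_mem]
          · gcongr
            exact wt_prime_le hs hP hP1
          · refine ⟨?_, fun Q hQ hd => hm.1.2 Q hQ (hd.mul_left P)⟩
            rintro rfl
            exact hm.1.1 (by simp)
        · simp only [f]
          rw [Set.indicator_of_notMem hm]; simp
      · intro I hI
        have := Set.mem_of_indicator_ne_zero hI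
        obtain ⟨J, rfl⟩ := this.2
        exact ⟨J, rfl⟩
    calc zS K S s ≤ ∑' I, ((cop (insert P S)).indicator (wt s) I + f I) := by
          refine ENNReal.tsum_le_tsum fun I => ?_
          by_cases hI : I ∈ cop S
          · by_cases hd : P ∣ I
            · simp only [f]
              rw [Set.indicator_of_mem hI, Set.indicator_of_mem (s := cop S ∩ {I | P ∣ I}) ⟨hI, hd⟩]
              exact le_add_self
            · rw [Set.indicator_of_mem hI, Set.indicator_of_mem (s := cop (insert P S))]
              · exact le_self_add
              · refine ⟨hI.1, ?_⟩
                rintro Q (rfl | hQ)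
                · exact hd
                · exact hI.2 Q hQ
          · rw [Set.indicator_of_notMem hI]; simp
      _ = zS K (insert P S) s + ∑' I, f I := ENNReal.tsum_add
      _ ≤ _ := by gcongr
  have hfin : zS K S s ≠ ⊤ := ne_top_of_le_ne_top (zetaSum_toReal K hs).1 (zS_le S s)
  have h2 : zS K S s = 2⁻¹ * zS K S s + 2⁻¹ * zS K S s := by
    rw [← add_mul, ENNReal.inv_two_add_inv_two, one_mul]
  have hfin2 : 2⁻¹ * zS K S s ≠ ⊤ := ENNReal.mul_ne_top (by simp) hfin
  have h3 : 2⁻¹ * zS K S s ≤ zS K (insert P S) s := by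
    nth_rewrite 1 [h2] at h1
    exact (ENNReal.add_le_add_iff_right hfin2).1 h1
  calc zS K S s = 2 * (2⁻¹ * zS K S s) := by
        rw [← mul_assoc, ENNReal.mul_inv_cancel (by simp) (by simp), one_mul]
    _ ≤ _ := by gcongr

lemma zeta_le_zS {K : Type*} [Field K] [NumberField K] (S : Finset (Ideal (𝓞 K))) {s : ℝ}
    (hs : 1 < s) (hS : ∀ P ∈ S, P ≠ ⊥ ∧ P ≠ ⊤) :
    zetaSum K s ≤ 2 ^ S.card * zS K S s := by
  classical
  induction S using Finset.induction_on with
  | empty => simp [zS_empty hs]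
  | insert P S hPS ih =>
    have h1 := ih (fun Q hQ => hS Q (Finset.mem_insert_of_mem hQ))
    have h2 := zS_insert (S : Set (Ideal (𝓞 K))) hs P (hS P (Finset.mem_insert_self _ _)).1
      (hS P (Finset.mem_insert_self _ _)).2
    rw [Finset.card_insert_of_notMem hPS, Finset.coe_insert, pow_succ, mul_assoc]
    exact h1.trans (by gcongr)

/-- multiplicative extension -/
def ext' {K L : Type*} [Field K] [NumberField K] [Field L] [NumberField L]
    (q : Ideal (𝓞 K) → Ideal (𝓞 L)) (I : Ideal (𝓞 K)) : Ideal (𝓞 L) :=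
  ((normalizedFactors I).map q).prod

section
variable {K L : Type*} [Field K] [NumberField K] [Field L] [NumberField L]

lemma normalizedFactors_ext' (q : Ideal (𝓞 K) → Ideal (𝓞 L)) (I : Ideal (𝓞 K))
    (h : ∀ P ∈ normalizedFactors I, Prime (q P)) :
    normalizedFactors (ext' q I) = (normalizedFactors I).map q := by
  refine normalizedFactors_prod_of_prime ?_
  intro Q hQ
  obtain ⟨P, hP, rfl⟩ := Multiset.mem_map.1 hQ
  exact h P hP

lemma absNorm_ext' (q : Ideal (𝓞 K) → Ideal (𝓞 L)) (I : Ideal (𝓞 K)) (hI : I ≠ ⊥)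
    (h : ∀ P ∈ normalizedFactors I, absNorm (q P) = absNorm P) :
    absNorm (ext' q I) = absNorm I := by
  have h2 : (normalizedFactors I).prod = I := _root_.prod_normalizedFactors_eq_self hI
  unfold ext'
  conv_rhs => rw [← h2]
  rw [map_multiset_prod, map_multiset_prod, Multiset.map_map]
  congr 1
  exact Multiset.map_congr rfl (fun P hP => h P hP)

theorem no_split (S : Finset (Ideal (𝓞 K))) (hS : ∀ P ∈ S, P ≠ ⊥ ∧ P ≠ ⊤)
    (q₁ q₂ : Ideal (𝓞 K) → Ideal (𝓞 L)) (r : Ideal (𝓞 L) → Ideal (𝓞 K))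
    (hq₁ : ∀ P, Prime P → P ∉ S → Prime (q₁ P) ∧ absNorm (q₁ P) = absNorm P ∧ r (q₁ P) = P)
    (hq₂ : ∀ P, Prime P → P ∉ S → Prime (q₂ P) ∧ absNorm (q₂ P) = absNorm P ∧ r (q₂ P) = P)
    (hne : ∀ P, Prime P → P ∉ S → q₁ P ≠ q₂ P) : False := by
  classical
  let E : Set (Ideal (𝓞 K)) := cop S
  have hE : ∀ I ∈ E, ∀ P ∈ normalizedFactors I, Prime P ∧ P ∉ S := fun I hI P hP =>
    ⟨prime_of_normalized_factor P hP, fun h => hI.2 P h (dvd_of_mem_normalizedFactors hP)⟩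
  let Φ : E × E → Ideal (𝓞 L) := fun p => ext' q₁ p.1.1 * ext' q₂ p.2.1
  have hpf : ∀ I ∈ E, ext' q₁ I ≠ 0 ∧ ext' q₂ I ≠ 0 := fun I hI => by
    constructor <;>
    · refine Multiset.prod_ne_zero ?_
      intro h0
      obtain ⟨P, hP, h0⟩ := Multiset.mem_map.1 h0
      have := hE I hI P hP
      first
      | exact (hq₁ P this.1 this.2).1.ne_zero h0
      | exact (hq₂ P this.1 this.2).1.ne_zero h0
  have hΦn : ∀ p, normalizedFactors (Φ p) =
      (normalizedFactors p.1.1).map q₁ + (normalizedFactors p.2.1).map q₂ := by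
    rintro ⟨⟨I, hI⟩, ⟨J, hJ⟩⟩
    simp only [Φ]
    rw [normalizedFactors_mul (hpf I hI).1 (hpf J hJ).2, normalizedFactors_ext',
      normalizedFactors_ext']
    · exact fun P hP => (hq₂ P (hE J hJ P hP).1 (hE J hJ P hP).2).1
    · exact fun P hP => (hq₁ P (hE I hI P hP).1 (hE I hI P hP).2).1
  have hrec : ∀ p : E × E, normalizedFactors p.1.1 =
      ((normalizedFactors (Φ p)).filter (fun Q => q₁ (r Q) = Q)).map r ∧
      normalizedFactors p.2.1 =
      ((normalizedFactors (Φ p)).filter (fun Q => ¬ q₁ (r Q) = Q)).map r := by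
    rintro ⟨⟨I, hI⟩, ⟨J, hJ⟩⟩
    rw [hΦn]
    simp only [Multiset.filter_add, Multiset.map_add]
    have a1 : ((normalizedFactors I).map q₁).filter (fun Q => q₁ (r Q) = Q) =
        (normalizedFactors I).map q₁ := by
      rw [Multiset.filter_eq_self]
      intro Q hQ
      obtain ⟨P, hP, rfl⟩ := Multiset.mem_map.1 hQ
      rw [(hq₁ P (hE I hI P hP).1 (hE I hI P hP).2).2.2]
    have a2 : ((normalizedFactors J).map q₂).filter (fun Q => ¬ q₁ (r Q) = Q) =
        (normalizedFactors J).map q₂ := by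
      rw [Multiset.filter_eq_self]
      intro Q hQ
      obtain ⟨P, hP, rfl⟩ := Multiset.mem_map.1 hQ
      rw [(hq₂ P (hE J hJ P hP).1 (hE J hJ P hP).2).2.2]
      exact hne P (hE J hJ P hP).1 (hE J hJ P hP).2
    have b1 : ((normalizedFactors I).map q₁).filter (fun Q => ¬ q₁ (r Q) = Q) = 0 := by
      rw [Multiset.filter_eq_nil]
      intro Q hQ
      obtain ⟨P, hP, rfl⟩ := Multiset.mem_map.1 hQ
      rw [(hq₁ P (hE I hI P hP).1 (hE I hI P hP).2).2.2]
      simp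
    have b2 : ((normalizedFactors J).map q₂).filter (fun Q => q₁ (r Q) = Q) = 0 := by
      rw [Multiset.filter_eq_nil]
      intro Q hQ
      obtain ⟨P, hP, rfl⟩ := Multiset.mem_map.1 hQ
      rw [(hq₂ P (hE J hJ P hP).1 (hE J hJ P hP).2).2.2]
      exact hne P (hE J hJ P hP).1 (hE J hJ P hP).2
    rw [a1, a2, b1, b2]
    simp only [Multiset.map_map, Multiset.map_zero, add_zero, zero_add, Function.comp_def]
    constructor
    · conv_lhs => rw [← Multiset.map_id' (normalizedFactors I)]
      exact (Multiset.map_congr rfl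
        (fun P hP => (hq₁ P (hE I hI P hP).1 (hE I hI P hP).2).2.2)).symm
    · conv_lhs => rw [← Multiset.map_id' (normalizedFactors J)]
      exact (Multiset.map_congr rfl
        (fun P hP => (hq₂ P (hE J hJ P hP).1 (hE J hJ P hP).2).2.2)).symm
  have hinj : Function.Injective Φ := by
    intro p p' h
    have h1 : normalizedFactors p.1.1 = normalizedFactors p'.1.1 := by
      rw [(hrec p).1, (hrec p').1, h]
    have h2 : normalizedFactors p.2.1 = normalizedFactors p'.2.1 := by
      rw [(hrec p).2, (hrec p').2, h]
    have k1 : p.1.1 = p'.1.1 := by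
      rw [← _root_.prod_normalizedFactors_eq_self p.1.2.1, h1, _root_.prod_normalizedFactors_eq_self p'.1.2.1]
    have k2 : p.2.1 = p'.2.1 := by
      rw [← _root_.prod_normalizedFactors_eq_self p.2.2.1, h2, _root_.prod_normalizedFactors_eq_self p'.2.2.1]
    exact Prod.ext (Subtype.ext k1) (Subtype.ext k2)
  have hwt : ∀ s, ∀ p : E × E, wt s p.1.1 * wt s p.2.1 = wt s (Φ p) := by
    rintro s ⟨⟨I, hI⟩, ⟨J, hJ⟩⟩
    simp only [Φ]
    rw [wt_mul]
    unfold wt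
    rw [absNorm_ext' q₁ I hI.1, absNorm_ext' q₂ J hJ.1]
    · exact fun P hP => (hq₂ P (hE J hJ P hP).1 (hE J hJ P hP).2).2.1
    · exact fun P hP => (hq₁ P (hE I hI P hP).1 (hE I hI P hP).2).2.1
  have key : ∀ s : ℝ, zS K S s * zS K S s ≤ zetaSum L s := by
    intro s
    have e1 : zS K S s = ∑' I : E, wt s I.1 := by
      unfold zS
      rw [← tsum_subtype]
    calc zS K S s * zS K S s = ∑' p : E × E, wt s p.1.1 * wt s p.2.1 := by
          rw [e1, ENNReal.tsum_prod', ← ENNReal.tsum_mul_right]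
          congr 1; ext I
          exact ENNReal.tsum_mul_left.symm
      _ = ∑' p : E × E, wt s (Φ p) := by simp_rw [hwt]
      _ ≤ ∑' Q, wt s Q := ENNReal.tsum_comp_le_tsum_of_injective hinj _
      _ = _ := rfl
  set c : ℝ := (2 : ℝ) ^ S.card * 2 ^ S.card
  have key2 : ∀ s : ℝ, 1 < s → (zetaSum K s).toReal * (zetaSum K s).toReal ≤
      c * (zetaSum L s).toReal := by
    intro s hs
    have h1 := zeta_le_zS S hs hS
    have h2 : zetaSum K s * zetaSum K s ≤ (2 ^ S.card * 2 ^ S.card) * zetaSum L s := by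
      calc _ ≤ (2 ^ S.card * zS K S s) * (2 ^ S.card * zS K S s) := by gcongr
        _ = (2 ^ S.card * 2 ^ S.card) * (zS K S s * zS K S s) := by ring
        _ ≤ _ := by gcongr; exact key s
    have h3 := ENNReal.toReal_mono
      (ENNReal.mul_ne_top (ENNReal.mul_ne_top (by simp) (by simp)) (zetaSum_toReal L hs).1) h2
    simpa [c, ENNReal.toReal_mul] using h3
  have t1 := zetaSum_tendsto K
  have t2 := zetaSum_tendsto L
  have t0 : Tendsto (fun s : ℝ => s - 1) (𝓝[>] 1) (𝓝 0) := by
    have : Tendsto (fun s : ℝ => s - 1) (𝓝 1) (𝓝 (1 - 1)) := by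
      exact (continuous_id.sub continuous_const).tendsto _
    rw [sub_self] at this
    exact this.mono_left nhdsWithin_le_nhds
  have t3 := (t0.mul t2).const_mul c
  have t4 := t1.mul t1
  have hle : dedekindZeta_residue K * dedekindZeta_residue K ≤
      c * (0 * dedekindZeta_residue L) := by
    refine le_of_tendsto_of_tendsto t4 t3 ?_
    filter_upwards [self_mem_nhdsWithin] with s hs
    have hs' : (0 : ℝ) ≤ (s - 1) * (s - 1) := mul_self_nonneg _
    have := mul_le_mul_of_nonneg_left (key2 s hs) hs'
    linarith
  have hp := dedekindZeta_residue_pos K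
  nlinarith
end

end CS
end
end

section
open Filter Ideal Topology nonZeroDivisors NumberField UniqueFactorizationMonoid Polynomial

noncomputable section
namespace CS

section
variable {F L : Type*} [Field F] [NumberField F] [Field L] [NumberField L] [Algebra F L]

lemma conductor (α : 𝓞 L) (hα : Algebra.adjoin F {(α : L)} = ⊤) :
    ∃ d : ℤ, d ≠ 0 ∧ ∀ b : 𝓞 L, (d : 𝓞 L) * b ∈ Algebra.adjoin (𝓞 F) {α} := by
  classical
  have h1 : ∀ a : L, ∃ d : ℤ, d ≠ 0 ∧ ∃ c ∈ Algebra.adjoin (𝓞 F) {α}, (d : L) * a = algebraMap (𝓞 L) L c := by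
    intro a
    have ha : a ∈ Algebra.adjoin F {(α : L)} := by rw [hα]; trivial
    induction ha using Algebra.adjoin_induction with
    | mem x hx =>
      rw [Set.mem_singleton_iff] at hx
      exact ⟨1, one_ne_zero, α, Algebra.subset_adjoin rfl, by simp [hx]⟩
    | algebraMap r =>
      obtain ⟨⟨c, ⟨d, hd⟩⟩, h⟩ := IsLocalization.surj (Algebra.algebraMapSubmonoid (𝓞 F) ℤ⁰) r
      obtain ⟨d, hd, rfl⟩ := hd
      refine ⟨d, nonZeroDivisors.ne_zero hd, algebraMap (𝓞 F) (𝓞 L) c,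
        Subalgebra.algebraMap_mem _ _, ?_⟩
      have h3 : algebraMap (𝓞 L) L (algebraMap (𝓞 F) (𝓞 L) c) =
        algebraMap F L (algebraMap (𝓞 F) F c) := rfl
      rw [h3, ← h]
      simp [mul_comm]
    | add x y _ _ hx hy =>
      obtain ⟨d, hd, c, hc, h⟩ := hx
      obtain ⟨d', hd', c', hc', h'⟩ := hy
      refine ⟨d * d', mul_ne_zero hd hd', (d' : 𝓞 L) * c + (d : 𝓞 L) * c', ?_, ?_⟩
      · exact add_mem (mul_mem (intCast_mem _ _) hc) (mul_mem (intCast_mem _ _) hc')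
      · push_cast [map_add, map_mul, map_intCast]
        rw [← h, ← h']; ring
    | mul x y _ _ hx hy =>
      obtain ⟨d, hd, c, hc, h⟩ := hx
      obtain ⟨d', hd', c', hc', h'⟩ := hy
      refine ⟨d * d', mul_ne_zero hd hd', c * c', mul_mem hc hc', ?_⟩
      rw [map_mul, ← h, ← h']; push_cast; ring
  have h2 : ∀ b : 𝓞 L, ∃ d : ℤ, d ≠ 0 ∧ (d : 𝓞 L) * b ∈ Algebra.adjoin (𝓞 F) {α} := by
    intro b
    obtain ⟨d, hd, c, hc, h⟩ := h1 b
    refine ⟨d, hd, ?_⟩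
    have : (d : 𝓞 L) * b = c := by
      apply RingOfIntegers.coe_injective
      simpa using h
    rwa [this]
  choose f hf0 hf using h2
  obtain ⟨s, hs⟩ := (Module.Finite.fg_top : (⊤ : Submodule ℤ (𝓞 L)).FG)
  refine ⟨∏ b ∈ s, f b, Finset.prod_ne_zero_iff.2 fun b _ => hf0 b, fun b => ?_⟩
  have hb : b ∈ Submodule.span ℤ (s : Set (𝓞 L)) := by rw [hs]; trivial
  induction hb using Submodule.span_induction with
  | mem x hx =>
    rw [← Finset.mul_prod_erase s f hx, mul_comm (f x)]
    push_cast
    rw [mul_assoc]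
    refine mul_mem ?_ (hf x)
    exact prod_mem fun b _ => intCast_mem _ _
  | zero => simp
  | add x y _ _ hx hy => rw [mul_add]; exact add_mem hx hy
  | smul a x _ hx =>
    rw [zsmul_eq_mul, mul_left_comm]
    exact mul_mem (intCast_mem _ _) hx

lemma local_root {M : ℕ} (hM : 0 < M) {ζ : 𝓞 F} (hζ : IsPrimitiveRoot ζ M) (α : 𝓞 L) (u : 𝓞 F)
    (hα : α ^ M = algebraMap (𝓞 F) (𝓞 L) u) (Q : Ideal (𝓞 L)) [Q.IsPrime] (x : 𝓞 F)
    (hx : algebraMap (𝓞 F) (𝓞 L) (u - x ^ M) ∈ Q) :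
    ∃ y : 𝓞 F, α - algebraMap (𝓞 F) (𝓞 L) y ∈ Q := by
  have : NeZero M := ⟨hM.ne'⟩
  have hinj : Function.Injective (algebraMap (𝓞 F) (𝓞 L)) := FaithfulSMul.algebraMap_injective _ _
  have hζ' := hζ.map_of_injective hinj
  rw [map_sub, map_pow, ← hα, hζ'.pow_sub_pow_eq_prod_sub_mul _ _ hM,
    Ideal.IsPrime.prod_mem_iff] at hx
  obtain ⟨η, hη, hx⟩ := hx
  rw [mem_nthRootsFinset hM] at hη
  obtain ⟨i, -, rfl⟩ := hζ'.eq_pow_of_pow_eq_one hη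
  exact ⟨ζ ^ i * x, by simpa using hx⟩

lemma norm_eq (α : 𝓞 L) (d : ℤ)
    (hd : ∀ b : 𝓞 L, (d : 𝓞 L) * b ∈ Algebra.adjoin (𝓞 F) {α})
    (P : Ideal (𝓞 F)) [P.IsMaximal] (Q : Ideal (𝓞 L)) (hQP : Q.comap (algebraMap (𝓞 F) (𝓞 L)) = P)
    (hdP : (d : 𝓞 F) ∉ P) (y : 𝓞 F) (hy : α - algebraMap (𝓞 F) (𝓞 L) y ∈ Q) :
    absNorm Q = absNorm P := by
  have hadj : ∀ b ∈ Algebra.adjoin (𝓞 F) {α}, ∃ c : 𝓞 F, b - algebraMap (𝓞 F) (𝓞 L) c ∈ Q := by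
    intro b hb
    induction hb using Algebra.adjoin_induction with
    | mem x hx => rw [Set.mem_singleton_iff] at hx; subst hx; exact ⟨y, hy⟩
    | algebraMap r => exact ⟨r, by simp⟩
    | add a b _ _ ha hb =>
      obtain ⟨c, hc⟩ := ha
      obtain ⟨c', hc'⟩ := hb
      refine ⟨c + c', ?_⟩
      have := Q.add_mem hc hc'
      rw [map_add]; convert this using 1; ring
    | mul a b _ _ ha hb =>
      obtain ⟨c, hc⟩ := ha
      obtain ⟨c', hc'⟩ := hb
      refine ⟨c * c', ?_⟩
      have := Q.add_mem (Q.mul_mem_left b hc) (Q.mul_mem_left (algebraMap (𝓞 F) (𝓞 L) c) hc')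
      rw [map_mul]; convert this using 1; ring
  obtain ⟨e, he⟩ : ∃ e : 𝓞 F, e * d - 1 ∈ P := by
    obtain ⟨e, z, hz, he⟩ := (inferInstance : P.IsMaximal).exists_inv hdP
    exact ⟨e, by rw [← he]; simpa using hz⟩
  have hle : P ≤ Q.comap (algebraMap (𝓞 F) (𝓞 L)) := hQP.ge
  have hbij : Function.Bijective (Ideal.quotientMap Q (algebraMap (𝓞 F) (𝓞 L)) hle) := by
    constructor
    · exact Ideal.quotientMap_injective' hQP.le
    · intro z
      obtain ⟨b, rfl⟩ := Ideal.Quotient.mk_surjective z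
      obtain ⟨c, hc⟩ := hadj _ (hd b)
      refine ⟨Ideal.Quotient.mk P (e * c), ?_⟩
      rw [Ideal.quotientMap_mk, Ideal.Quotient.eq]
      have he' : algebraMap (𝓞 F) (𝓞 L) (e * d - 1) ∈ Q := hle he
      have h1 := Q.sub_mem (Q.mul_mem_right b he') (Q.mul_mem_left (algebraMap (𝓞 F) (𝓞 L) e) hc)
      simp only [map_sub, map_mul, map_intCast, map_one] at h1 ⊢
      convert h1 using 1; ring
  rw [absNorm_apply, absNorm_apply, Submodule.cardQuot_apply, Submodule.cardQuot_apply]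
  exact (Nat.card_congr (Equiv.ofBijective _ hbij)).symm

theorem kummer_aux {M : ℕ} (hM : 0 < M) {ζ : 𝓞 F} (hζ : IsPrimitiveRoot ζ M) (α : 𝓞 L) (u : 𝓞 F)
    (hα : α ^ M = algebraMap (𝓞 F) (𝓞 L) u) (hgen : Algebra.adjoin F {(α : L)} = ⊤)
    (σ : L ≃ₐ[F] L) (hσ : σ (α : L) ≠ α)
    (hu : ∀ P : Ideal (𝓞 F), P.IsPrime → P ≠ ⊥ → ∃ x : 𝓞 F, u - x ^ M ∈ P) : False := by
  classical
  obtain ⟨d, hd0, hd⟩ := conductor (F := F) α hgen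
  let τ : 𝓞 L ≃ₐ[𝓞 F] 𝓞 L := RingOfIntegers.mapAlgEquiv σ
  have hτ : τ α - α ≠ 0 := by
    intro h
    apply hσ
    have := congrArg (algebraMap (𝓞 L) L) (sub_eq_zero.1 h)
    exact this
  let n : ℕ := absNorm (Ideal.span {τ α - α})
  have hn0 : n ≠ 0 := by
    simp only [n, Ne, absNorm_eq_zero_iff, Ideal.span_singleton_eq_bot]; exact hτ
  have hn : τ α - α ∣ (n : 𝓞 L) := Ideal.mem_span_singleton.1 (absNorm_mem _)
  let D : 𝓞 F := (d : 𝓞 F) * (n : 𝓞 F)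
  have hD0 : D ≠ 0 := mul_ne_zero (by exact_mod_cast hd0) (by exact_mod_cast hn0)
  have hD0' : Ideal.span {D} ≠ ⊥ := by rwa [Ne, Ideal.span_singleton_eq_bot]
  let S : Finset (Ideal (𝓞 F)) := (normalizedFactors (Ideal.span {D})).toFinset
  have hS : ∀ P ∈ S, P ≠ ⊥ ∧ P ≠ ⊤ := by
    intro P hP
    rw [Multiset.mem_toFinset, Ideal.mem_normalizedFactors_iff hD0'] at hP
    refine ⟨?_, hP.1.ne_top⟩
    rintro rfl
    exact hD0' (le_bot_iff.1 hP.2)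
  have hex : ∀ P : Ideal (𝓞 F), ∃ Q : Ideal (𝓞 L), Prime P → P ∉ S →
      Prime Q ∧ absNorm Q = absNorm P ∧ Q.comap (algebraMap (𝓞 F) (𝓞 L)) = P ∧
      Prime (Q.comap (τ : 𝓞 L →+* 𝓞 L)) ∧ absNorm (Q.comap (τ : 𝓞 L →+* 𝓞 L)) = absNorm P ∧
      (Q.comap (τ : 𝓞 L →+* 𝓞 L)).comap (algebraMap (𝓞 F) (𝓞 L)) = P ∧
      Q ≠ (Q.comap (τ : 𝓞 L →+* 𝓞 L)) := by
    intro P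
    by_cases hP : Prime P ∧ P ∉ S
    swap
    · exact ⟨⊥, fun h1 h2 => (hP ⟨h1, h2⟩).elim⟩
    obtain ⟨hP, hPS⟩ := hP
    have hPp : P.IsPrime := Ideal.isPrime_of_prime hP
    have hPb : P ≠ ⊥ := hP.ne_zero
    have hPm : P.IsMaximal := hPp.isMaximal hPb
    have hDP : D ∉ P := by
      intro h
      apply hPS
      rw [Multiset.mem_toFinset, Ideal.mem_normalizedFactors_iff hD0']
      exact ⟨hPp, (Ideal.span_singleton_le_iff_mem _).2 h⟩
    have hdP : (d : 𝓞 F) ∉ P := fun h => hDP (P.mul_mem_right _ h)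
    have hnP : (n : 𝓞 F) ∉ P := fun h => hDP (P.mul_mem_left _ h)
    obtain ⟨x, hx⟩ := hu P hPp hPb
    obtain ⟨Q, -, hQp, hQP⟩ := Ideal.exists_ideal_over_prime_of_isIntegral (S := 𝓞 L) P ⊥ (by
      rw [Ideal.comap_bot_of_injective _ (FaithfulSMul.algebraMap_injective (𝓞 F) (𝓞 L))]
      exact bot_le)
    have main : ∀ Q : Ideal (𝓞 L), Q.IsPrime → Q.comap (algebraMap (𝓞 F) (𝓞 L)) = P →
        Prime Q ∧ absNorm Q = absNorm P := by
      intro Q hQ hQP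
      obtain ⟨y, hy⟩ := local_root hM hζ α u hα Q x (by rw [← hQP] at hx; exact hx)
      refine ⟨Ideal.prime_of_isPrime ?_ hQ, norm_eq α d hd P Q hQP hdP y hy⟩
      rintro rfl
      rw [Ideal.comap_bot_of_injective _ (FaithfulSMul.algebraMap_injective (𝓞 F) (𝓞 L))] at hQP
      exact hPb hQP.symm
    have h2 : (Q.comap (τ : 𝓞 L →+* 𝓞 L)).comap (algebraMap (𝓞 F) (𝓞 L)) = P := by
      rw [← hQP]
      ext z
      simp [Ideal.mem_comap]
    refine ⟨Q, fun _ _ => ⟨(main Q hQp hQP).1, (main Q hQp hQP).2, hQP,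
      (main _ (Ideal.comap_isPrime _ _) h2).1, (main _ (Ideal.comap_isPrime _ _) h2).2, h2, ?_⟩⟩
    intro hEq
    obtain ⟨y, hy⟩ := local_root hM hζ α u hα Q x (by rw [← hQP] at hx; exact hx)
    have hy2 := hy
    rw [hEq, Ideal.mem_comap] at hy2
    have h3 : τ α - α ∈ Q := by
      have := Q.sub_mem hy2 hy
      simpa using this
    have h4 : (n : 𝓞 L) ∈ Q := Q.mem_of_dvd hn h3
    apply hnP
    rw [← hQP, Ideal.mem_comap]
    simpa using h4
  choose q hq using hex
  refine no_split S hS q (fun P => (q P).comap (τ : 𝓞 L →+* 𝓞 L))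
    (fun Q => Q.comap (algebraMap (𝓞 F) (𝓞 L)))
    (fun P h1 h2 => ⟨(hq P h1 h2).1, (hq P h1 h2).2.1, (hq P h1 h2).2.2.1⟩)
    (fun P h1 h2 => ⟨(hq P h1 h2).2.2.2.1, (hq P h1 h2).2.2.2.2.1, (hq P h1 h2).2.2.2.2.2.1⟩)
    (fun P h1 h2 => (hq P h1 h2).2.2.2.2.2.2)

end

theorem local_global_power {F : Type*} [Field F] [NumberField F] {M : ℕ} (hM : 0 < M) {ζ : F}
    (hζ : IsPrimitiveRoot ζ M) (u : 𝓞 F) (hu0 : u ≠ 0)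
    (hu : ∀ P : Ideal (𝓞 F), P.IsPrime → P ≠ ⊥ → ∃ x : 𝓞 F, u - x ^ M ∈ P) :
    ∃ w : F, w ^ M = u := by
  have : NeZero M := ⟨hM.ne'⟩
  by_contra hw
  let p : F[X] := X ^ M - C (u : F)
  let L := p.SplittingField
  have : NumberField L := NumberField.of_module_finite F _
  have hu0' : (u : F) ≠ 0 := by simpa using hu0
  have hsep : p.Separable := separable_X_pow_sub_C _ (by exact_mod_cast hM.ne') hu0'
  have : IsGalois F L := IsGalois.of_separable_splitting_field (p := p) hsep
  have hdeg : (p.map (algebraMap F L)).degree ≠ 0 := by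
    rw [degree_map, degree_X_pow_sub_C hM]
    exact_mod_cast hM.ne'
  obtain ⟨a, ha⟩ := (SplittingField.splits p).exists_eval_eq_zero hdeg
  have haM : a ^ M = algebraMap F L u := by
    simp [p] at ha
    exact sub_eq_zero.1 ha
  have ha0 : a ≠ 0 := by
    rintro rfl
    rw [zero_pow hM.ne', eq_comm, map_eq_zero] at haM
    exact hu0' haM
  have haInt : IsIntegral ℤ a := by
    apply IsIntegral.of_pow hM
    rw [haM]
    exact (RingOfIntegers.isIntegral_coe u).map (algebraMap F L).toIntAlgHom
  have hnb : a ∉ (⊥ : IntermediateField F L) := by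
    rintro ⟨w, rfl⟩
    apply hw
    refine ⟨w, ?_⟩
    apply (algebraMap F L).injective
    rw [map_pow]; exact haM
  rw [IsGalois.mem_bot_iff_fixed] at hnb
  push Not at hnb
  obtain ⟨σ, hσ⟩ := hnb
  refine kummer_aux (L := L) hM (hζ.toInteger_isPrimitiveRoot) (⟨a, haInt⟩ : 𝓞 L) u ?_ ?_ σ hσ hu
  · apply RingOfIntegers.coe_injective
    change a ^ M = algebraMap F L (algebraMap (𝓞 F) F u)
    exact haM
  · rw [eq_top_iff, ← SplittingField.adjoin_rootSet p, Algebra.adjoin_le_iff]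
    intro b hb
    rw [mem_rootSet] at hb
    have hbM : b ^ M = algebraMap F L u := by
      have := hb.2
      simp [p] at this
      exact sub_eq_zero.1 this
    have h1 : (b / a) ^ M = 1 := by
      rw [div_pow, hbM, haM, div_self]
      rw [← haM]; exact pow_ne_zero _ ha0
    obtain ⟨i, -, hi⟩ := (hζ.map_of_injective (algebraMap F L).injective).eq_pow_of_pow_eq_one h1
    have : b = algebraMap F L (ζ ^ i) * a := by
      rw [map_pow, hi, div_mul_cancel₀ _ ha0]
    rw [this]
    exact mul_mem (Subalgebra.algebraMap_mem _ _) (Algebra.subset_adjoin rfl)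

end CS
end
end

section
open NumberField

noncomputable section
namespace CS

lemma sah {K F : Type*} [Field K] [Field F] [Algebra K F] [FiniteDimensional K F] [IsGalois K F]
    (hab : ∀ σ τ : Gal(F/K), ∀ x, σ (τ x) = τ (σ x))
    {M : ℕ} (hM : 0 < M) {ζ : F} (hζ : IsPrimitiveRoot ζ M) (u : K) (hu : u ≠ 0)
    (y : F) (hy : y ^ M = algebraMap K F u) :
    ∃ g : ℕ, 0 < g ∧ (∃ x : K, x ^ M = u ^ g) ∧ ∃ η : K, IsPrimitiveRoot η g := by
  have : NeZero M := ⟨hM.ne'⟩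
  have hu' : algebraMap K F u ≠ 0 := by simpa using hu
  have hy0 : y ≠ 0 := by
    rintro rfl
    rw [zero_pow hM.ne'] at hy
    exact hu' hy.symm
  have hζ0 : ζ ≠ 0 := hζ.ne_zero hM.ne'
  let S : AddSubgroup ℤ :=
    { carrier := {j | ∃ x : K, x ^ M = u ^ j}
      zero_mem' := ⟨1, by simp⟩
      add_mem' := by
        rintro a b ⟨x, hx⟩ ⟨z, hz⟩
        exact ⟨x * z, by rw [mul_pow, hx, hz, zpow_add₀ hu]⟩
      neg_mem' := by
        rintro a ⟨x, hx⟩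
        exact ⟨x⁻¹, by rw [inv_pow, hx, zpow_neg]⟩ }
  have hMS : (M : ℤ) ∈ S := ⟨u, by simp⟩
  obtain ⟨a, ha⟩ := Int.subgroup_cyclic S
  have hmem : ∀ j, j ∈ S ↔ (a.natAbs : ℤ) ∣ j := by
    intro j
    rw [ha, AddSubgroup.mem_closure_singleton, Int.natAbs_dvd]
    constructor
    · rintro ⟨k, rfl⟩; exact ⟨k, by simp [mul_comm]⟩
    · rintro ⟨k, rfl⟩; exact ⟨k, by simp [mul_comm]⟩
  set g := a.natAbs with hg
  have hgM : g ∣ M := by exact_mod_cast (hmem _).1 hMS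
  have hg0 : 0 < g := Nat.pos_of_dvd_of_pos hgM hM
  refine ⟨g, hg0, ?_, ?_⟩
  · obtain ⟨x, hx⟩ := (hmem g).2 dvd_rfl
    exact ⟨x, by rw [hx, zpow_natCast]⟩
  · have hroot : ∀ σ : Gal(F/K), ∃ i : ℕ, σ y = ζ ^ i * y := by
      intro σ
      have h1 : (σ y / y) ^ M = 1 := by
        rw [div_pow, ← map_pow, hy, AlgEquiv.commutes, div_self hu']
      obtain ⟨i, -, hi⟩ := hζ.eq_pow_of_pow_eq_one h1
      exact ⟨i, by rw [hi, div_mul_cancel₀ _ hy0]⟩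
    have hfix : ∀ τ : Gal(F/K), τ (ζ ^ (M / g)) = ζ ^ (M / g) := by
      intro τ
      have h1 : (τ ζ) ^ M = 1 := by rw [← map_pow, hζ.pow_eq_one, map_one]
      obtain ⟨t, -, ht⟩ := hζ.eq_pow_of_pow_eq_one h1
      have hτy : τ y ≠ 0 := by simpa using hy0
      have hz : ∀ σ : Gal(F/K), σ (y ^ t / τ y) = y ^ t / τ y := by
        intro σ
        obtain ⟨i, hi⟩ := hroot σ
        rw [map_div₀, map_pow, hab σ τ, hi, map_mul, map_pow, ← ht, mul_pow, ← pow_mul, ← pow_mul,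
          mul_comm i t, mul_div_mul_left _ _ (pow_ne_zero _ hζ0)]
      obtain ⟨z, hz⟩ := IntermediateField.mem_bot.1 ((IsGalois.mem_bot_iff_fixed _).2 hz)
      have hS : (t - 1 : ℤ) ∈ S := by
        refine ⟨z, (algebraMap K F).injective ?_⟩
        rw [map_pow, hz, div_pow, ← map_pow τ, hy, AlgEquiv.commutes, ← pow_mul, mul_comm t M,
          pow_mul, hy, map_zpow₀, zpow_sub₀ hu', zpow_natCast, zpow_one]
      obtain ⟨k, hk⟩ := (hmem _).1 hS
      rw [map_pow, ← ht, ← pow_mul, ← zpow_natCast, ← zpow_natCast]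
      have : ((t * (M / g) : ℕ) : ℤ) = (M / g : ℕ) + M * k := by
        obtain ⟨c, hc⟩ := hgM
        rw [hc, Nat.mul_div_cancel_left _ hg0]
        push_cast
        have : (t : ℤ) = 1 + g * k := by linarith
        rw [this]; ring
      rw [this, zpow_add₀ hζ0, zpow_mul, zpow_natCast ζ M, hζ.pow_eq_one, one_zpow, mul_one]
    obtain ⟨η, hη⟩ := IntermediateField.mem_bot.1 ((IsGalois.mem_bot_iff_fixed _).2 hfix)
    refine ⟨η, ?_⟩
    have h2 : IsPrimitiveRoot (ζ ^ (M / g)) g :=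
      hζ.pow hM (Nat.div_mul_cancel hgM).symm
    rw [← hη] at h2
    exact h2.of_map_of_injective (algebraMap K F).injective

lemma good_pow {K : Type*} [Field K] [NumberField K] {M : ℕ} (hM : 0 < M) (u : (𝓞 K)ˣ)
    (hu : ∀ P : Ideal (𝓞 K), P.IsPrime → P ≠ ⊥ → ∃ x : 𝓞 K, (u : 𝓞 K) - x ^ M ∈ P) :
    ∃ x : (𝓞 K)ˣ, x ^ M = u ^ (Units.torsionOrder K) := by
  have : NeZero M := ⟨hM.ne'⟩
  have : NeZero (M : K) := ⟨by exact_mod_cast hM.ne'⟩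
  let F := CyclotomicField M K
  have : NumberField F := IsCyclotomicExtension.numberField {M} K F
  have : FiniteDimensional K F := IsCyclotomicExtension.finiteDimensional {M} K F
  have : IsGalois K F := IsCyclotomicExtension.isGalois {M} K F
  have hζ := IsCyclotomicExtension.zeta_spec M K F
  have h1 : ∃ y : F, y ^ M = (algebraMap (𝓞 K) (𝓞 F) u : 𝓞 F) := by
    refine local_global_power hM hζ _ (by simp) ?_
    intro P hP hP0
    obtain ⟨x, hx⟩ := hu (P.comap (algebraMap (𝓞 K) (𝓞 F))) inferInstance
      (Ideal.IsIntegral.comap_ne_bot (𝓞 K) hP0)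
    exact ⟨algebraMap _ _ x, by simpa using hx⟩
  obtain ⟨y, hy⟩ := h1
  have hab : ∀ σ τ : Gal(F/K), ∀ x, σ (τ x) = τ (σ x) := by
    intro σ τ x
    have := IsCyclotomicExtension.isMulCommutative {M} K F
    have h := this.is_comm.comm σ τ
    exact DFunLike.congr_fun h x
  obtain ⟨g, hg0, ⟨x, hx⟩, η, hη⟩ := sah hab hM hζ (u : K) (by simp) y (by rw [hy]; rfl)
  have hgw : g ∣ Units.torsionOrder K := by
    have : NeZero g := ⟨hg0.ne'⟩
    have h3 : IsPrimitiveRoot (hη.toInteger (k := g)) g := hη.toInteger_isPrimitiveRoot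
    obtain ⟨v, hv⟩ := h3.isUnit hg0.ne'
    have h4 : IsPrimitiveRoot v g := by
      rw [← hv] at h3
      exact IsPrimitiveRoot.coe_units_iff.1 h3
    have h5 : v ∈ Units.torsion K := by
      rw [Units.torsion, CommGroup.mem_torsion, isOfFinOrder_iff_pow_eq_one]
      exact ⟨g, hg0, h4.pow_eq_one⟩
    rw [h4.eq_orderOf, Units.torsionOrder, ← Subgroup.orderOf_mk v h5]
    exact orderOf_dvd_natCard _
  obtain ⟨k, hk⟩ := hgw
  have hxi : ∀ (z : K) (v : (𝓞 K)ˣ), z ^ M = (v : K) ^ g → IsIntegral ℤ z := by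
    intro z v hz
    apply IsIntegral.of_pow hM
    rw [hz]
    exact (RingOfIntegers.isIntegral_coe _).pow _
  have hx0 : x ≠ 0 := by
    rintro rfl
    rw [zero_pow hM.ne'] at hx
    exact pow_ne_zero g (by simp) hx.symm
  have hi1 := hxi x u hx
  have hi2 := hxi x⁻¹ u⁻¹ (by rw [inv_pow, hx]; simp)
  let X : (𝓞 K)ˣ := ⟨⟨x, hi1⟩, ⟨x⁻¹, hi2⟩,
    RingOfIntegers.coe_injective (mul_inv_cancel₀ hx0),
    RingOfIntegers.coe_injective (inv_mul_cancel₀ hx0)⟩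
  have hX : X ^ M = u ^ g := by
    apply Units.ext
    apply RingOfIntegers.coe_injective
    push_cast [map_pow]
    exact hx
  refine ⟨X ^ k, ?_⟩
  rw [← pow_mul, mul_comm, pow_mul, hX, hk, pow_mul]

lemma powMonoidHom_range_finite {U : Type*} [CommGroup U] [Group.FG U] {M : ℕ} (hM : 0 < M) :
    Finite (U ⧸ (powMonoidHom M : U →* U).range) := by
  refine CommGroup.finite_of_fg_torsion _ ?_
  intro q
  obtain ⟨u, rfl⟩ := QuotientGroup.mk_surjective q
  rw [isOfFinOrder_iff_pow_eq_one]
  refine ⟨M, hM, ?_⟩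
  rw [← QuotientGroup.mk_pow, QuotientGroup.eq_one_iff]
  exact ⟨u, rfl⟩

lemma exists_good {K : Type*} [Field K] [NumberField K] {M : ℕ} (hM : 0 < M) :
    ∃ N : ℕ, 0 < N ∧ ∀ u : (𝓞 K)ˣ, (N : 𝓞 K) ∣ u - 1 →
      ∀ P : Ideal (𝓞 K), P.IsPrime → P ≠ ⊥ → ∃ x : 𝓞 K, (u : 𝓞 K) - x ^ M ∈ P := by
  classical
  let R := (powMonoidHom M : (𝓞 K)ˣ →* (𝓞 K)ˣ).range
  have : Group.FG (𝓞 K)ˣ := Group.fg_iff_monoid_fg.2 inferInstance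
  have : Finite ((𝓞 K)ˣ ⧸ R) := powMonoidHom_range_finite hM
  have := Fintype.ofFinite ((𝓞 K)ˣ ⧸ R)
  have key : ∀ q : (𝓞 K)ˣ ⧸ R, ∃ N : ℕ, 0 < N ∧ ∀ u : (𝓞 K)ˣ, (u : (𝓞 K)ˣ ⧸ R) = q →
      (N : 𝓞 K) ∣ u - 1 →
      ∀ P : Ideal (𝓞 K), P.IsPrime → P ≠ ⊥ → ∃ x : 𝓞 K, (u : 𝓞 K) - x ^ M ∈ P := by
    intro q
    by_contra! hcon
    obtain ⟨u0, hu0, -, P, hP, hP0, hbad⟩ := hcon 1 one_pos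
    obtain ⟨u, hu, hd, -⟩ := hcon (Ideal.absNorm P)
      (Nat.pos_of_ne_zero (by rwa [Ne, Ideal.absNorm_eq_zero_iff]))
    have h1 : (u : 𝓞 K) - 1 ∈ P := by
      obtain ⟨c, hc⟩ := hd
      rw [hc]
      exact P.mul_mem_right _ (Ideal.absNorm_mem P)
    have h2 : u⁻¹ * u0 ∈ R := by
      rw [← QuotientGroup.eq, hu, hu0]
    obtain ⟨z, hz⟩ := h2
    apply hbad z
    have h3 : (u0 : 𝓞 K) = u * (z : 𝓞 K) ^ M := by
      have : u0 = u * z ^ M := by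
        rw [eq_comm, ← eq_inv_mul_iff_mul_eq]; exact hz
      rw [this]; simp
    have h4 : (u0 : 𝓞 K) - (z : 𝓞 K) ^ M = (u - 1) * (z : 𝓞 K) ^ M := by rw [h3]; ring
    rw [h4]
    exact P.mul_mem_right _ h1
  choose N hN0 hN using key
  refine ⟨∏ q, N q, Finset.prod_pos fun q _ => hN0 q, fun u hu => ?_⟩
  apply hN _ u rfl
  refine dvd_trans ?_ hu
  exact Nat.cast_dvd_cast (Finset.dvd_prod_of_mem N (Finset.mem_univ _))

lemma exists_sep_torsion (K : Type*) [Field K] [NumberField K] :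
    ∃ N : ℕ, 0 < N ∧ ∀ u ∈ Units.torsion K, (N : 𝓞 K) ∣ u - 1 → u = 1 := by
  classical
  have := Fintype.ofFinite (Units.torsion K)
  have key : ∀ q : Units.torsion K, ∃ N : ℕ, 0 < N ∧ ((N : 𝓞 K) ∣ (q : (𝓞 K)ˣ) - 1 →
      q = 1) := by
    intro q
    by_cases hq : q = 1
    · exact ⟨1, one_pos, fun _ => hq⟩
    have h0 : ((q : (𝓞 K)ˣ) : 𝓞 K) - 1 ≠ 0 := by
      rw [Ne, sub_eq_zero]
      intro h
      apply hq
      apply Subtype.ext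
      apply Units.ext
      exact h
    set b := ((q : (𝓞 K)ˣ) : 𝓞 K) - 1
    set n := (Algebra.norm ℤ b).natAbs with hn
    have hn0 : n ≠ 0 := by rw [hn, Int.natAbs_ne_zero, Ne, Algebra.norm_eq_zero_iff]; exact h0
    refine ⟨2 * n, by omega, fun h => absurd h ?_⟩
    rintro ⟨c, hc⟩
    have h1 : Ideal.absNorm (Ideal.span {((2 * n : ℕ) : 𝓞 K)}) ∣ Ideal.absNorm (Ideal.span {b}) :=
      map_dvd _ (Ideal.dvd_iff_le.2 (by rw [Ideal.span_singleton_le_span_singleton]; exact ⟨c, hc⟩))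
    rw [Ideal.absNorm_span_singleton, Ideal.absNorm_span_singleton, ← hn] at h1
    have h2 : Algebra.norm ℤ ((2 * n : ℕ) : 𝓞 K) = ((2 * n : ℕ) : ℤ) ^ Module.finrank ℤ (𝓞 K) := by
      have := Algebra.norm_algebraMap (R := ℤ) (S := 𝓞 K) ((2 * n : ℕ) : ℤ)
      simpa using this
    rw [h2, Int.natAbs_pow, Int.natAbs_natCast] at h1
    have h3 := Nat.le_of_dvd (Nat.pos_of_ne_zero hn0) h1
    have h4 : 2 * n ≤ (2 * n) ^ Module.finrank ℤ (𝓞 K) :=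
      Nat.le_self_pow (Module.finrank_pos).ne' _
    omega
  choose N hN0 hN using key
  refine ⟨∏ q, N q, Finset.prod_pos fun q _ => hN0 q, fun u hu h => ?_⟩
  have := hN ⟨u, hu⟩ (dvd_trans
    (Nat.cast_dvd_cast (Finset.dvd_prod_of_mem N (Finset.mem_univ _))) h)
  exact congrArg Subtype.val this

theorem chevalley (K : Type*) [Field K] [NumberField K] {m : ℕ} (hm : 0 < m) :
    ∃ N : ℕ, 0 < N ∧ ∀ u : (𝓞 K)ˣ, (N : 𝓞 K) ∣ u - 1 → ∃ v : (𝓞 K)ˣ, u = v ^ m := by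
  obtain ⟨N0, hN0, hsep⟩ := exists_sep_torsion K
  set w := Units.torsionOrder K with hw
  have hw0 : 0 < w := Units.torsionOrder_pos K
  let I : Ideal (𝓞 K) := Ideal.span {(N0 : 𝓞 K)}
  have hI : I ≠ ⊥ := by
    simp only [I, Ne, Ideal.span_singleton_eq_bot]
    exact_mod_cast hN0.ne'
  have hfin : Finite (𝓞 K ⧸ I) := by
    rw [← Ideal.absNorm_ne_zero_iff, Ne, Ideal.absNorm_eq_zero_iff]; exact hI
  set n0 := Nat.card (𝓞 K ⧸ I)ˣ
  have hn0 : 0 < n0 := Nat.card_pos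
  have hM : 0 < w * n0 * m := by positivity
  obtain ⟨N1, hN1, hgood⟩ := exists_good (K := K) hM
  refine ⟨N0 * N1, by positivity, fun u hu => ?_⟩
  push_cast at hu
  obtain ⟨x, hx⟩ := good_pow hM u (hgood u (dvd_trans (Dvd.intro_left _ rfl) hu))
  let ξ : (𝓞 K)ˣ := u / (x ^ (n0 * m))
  have hξ : ξ ∈ Units.torsion K := by
    rw [Units.torsion, CommGroup.mem_torsion, isOfFinOrder_iff_pow_eq_one]
    refine ⟨w, hw0, ?_⟩
    simp only [ξ]
    rw [div_pow, ← pow_mul, mul_comm _ w, ← mul_assoc, hx, ← hw, div_self']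
  have hξ1 : ξ = 1 := by
    apply hsep _ hξ
    rw [← Ideal.mem_span_singleton]
    change _ ∈ I
    rw [← Ideal.Quotient.eq_zero_iff_mem, map_sub, sub_eq_zero, map_one]
    let f := Units.map (Ideal.Quotient.mk I : 𝓞 K →* 𝓞 K ⧸ I)
    have h1 : f u = 1 := by
      apply Units.ext
      have : (u : 𝓞 K) - 1 ∈ I :=
        Ideal.mem_span_singleton.2 (dvd_trans (Dvd.intro _ rfl) hu)
      rw [← Ideal.Quotient.eq_zero_iff_mem, map_sub, sub_eq_zero, map_one] at this
      exact this
    have h2 : f ξ = 1 := by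
      simp only [ξ]
      rw [map_div, h1, map_pow, pow_mul, pow_card_eq_one', one_pow, div_one]
    exact congrArg Units.val h2
  refine ⟨x ^ n0, ?_⟩
  rw [← pow_mul]
  exact div_eq_one.1 hξ1

end CS
end
end

section
open NumberField nonZeroDivisors

noncomputable section
namespace CS
universe u

lemma exists_unit_hom_domain (D : Type u) [CommRing D] [IsDomain D] [Module.Finite ℤ D]
    [CharZero D] : ∃ (W : Type u) (_ : CommGroup W) (_ : Group.FG W) (φ : Dˣ →* W),
      (∀ v, φ v = 1 → v = 1) ∧
      ∀ m : ℕ, 0 < m → ∃ N : ℕ, 0 < N ∧ ∀ v : Dˣ, (N : D) ∣ v - 1 → ∃ w, φ v = w ^ m := by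
  have : FaithfulSMul ℤ D := (faithfulSMul_iff_algebraMap_injective ℤ D).2 Int.cast_injective
  let K := FractionRing D
  let : Algebra ℤ K := Ring.toIntAlgebra K
  have : CharZero K := charZero_of_injective_algebraMap (IsFractionRing.injective D K)
  have : NumberField K := { to_finiteDimensional := Module.Finite.of_isLocalization ℤ D ℤ⁰ }
  let f : D →+* 𝓞 K := ((algebraMap D K).toIntAlgHom.codRestrict (integralClosure ℤ K) (fun x =>
    (Algebra.IsIntegral.isIntegral (R := ℤ) x).map (algebraMap D K).toIntAlgHom)).toRingHom
  have hf : Function.Injective f := by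
    intro a b hab
    apply IsFractionRing.injective D K
    exact congrArg Subtype.val hab
  refine ⟨(𝓞 K)ˣ, inferInstance, Group.fg_iff_monoid_fg.2 inferInstance, Units.map f, ?_, ?_⟩
  · intro v hv
    apply Units.ext
    apply hf
    rw [Units.val_one, map_one]
    exact congrArg Units.val hv
  · intro m hm
    obtain ⟨N, hN, h⟩ := chevalley K hm
    refine ⟨N, hN, fun v hv => h _ ?_⟩
    obtain ⟨c, hc⟩ := hv
    refine ⟨f c, ?_⟩
    have := congrArg f hc
    simpa using this

theorem exists_unit_hom (R : Type u) [CommRing R] [IsReduced R] [Module.Finite ℤ R]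
    (htf : ∀ (n : ℤ) (x : R), n ≠ 0 → (n : R) * x = 0 → x = 0) :
    ∃ (W : Type u) (_ : CommGroup W) (_ : Group.FG W) (φ : Rˣ →* W),
      (∀ v, φ v = 1 → v = 1) ∧
      ∀ m : ℕ, 0 < m → ∃ N : ℕ, 0 < N ∧ ∀ v : Rˣ, (N : R) ∣ v - 1 → ∃ w, φ v = w ^ m := by
  classical
  have : IsNoetherianRing R := isNoetherian_of_tower ℤ inferInstance
  have hfin := minimalPrimes.finite_of_isNoetherianRing R
  have := hfin.fintype
  have key : ∀ p : minimalPrimes R, ∃ (W : Type u) (_ : CommGroup W) (_ : Group.FG W)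
      (φ : Rˣ →* W), (∀ v, φ v = 1 → (v : R) - 1 ∈ (p : Ideal R)) ∧
      ∀ m : ℕ, 0 < m → ∃ N : ℕ, 0 < N ∧ ∀ v : Rˣ, (N : R) ∣ v - 1 → ∃ w, φ v = w ^ m := by
    intro p
    have hp : (p : Ideal R).IsPrime := p.2.1.1
    have : CharZero (R ⧸ (p : Ideal R)) := by
      refine charZero_of_inj_zero ?_
      intro n hn
      by_contra h0
      rw [← map_natCast (Ideal.Quotient.mk (p : Ideal R)), Ideal.Quotient.eq_zero_iff_mem] at hn
      refine notMem_nonZeroDivisors_of_mem_mem_minimalPrimes hn p.2 ?_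
      rw [mem_nonZeroDivisors_iff_right]
      intro x hx
      exact htf n x (by exact_mod_cast h0) (by rw [mul_comm]; exact_mod_cast hx)
    have : Module.Finite ℤ (R ⧸ (p : Ideal R)) :=
      Module.Finite.of_surjective (Ideal.Quotient.mk (p : Ideal R)).toAddMonoidHom.toIntLinearMap
        Ideal.Quotient.mk_surjective
    obtain ⟨W, i1, i2, φ, h1, h2⟩ := exists_unit_hom_domain (R ⧸ (p : Ideal R))
    refine ⟨W, i1, i2, φ.comp (Units.map (Ideal.Quotient.mk (p : Ideal R))), ?_, ?_⟩
    · intro v hv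
      have := congrArg Units.val (h1 _ hv)
      rw [← Ideal.Quotient.eq_zero_iff_mem, map_sub, sub_eq_zero, map_one]
      exact this
    · intro m hm
      obtain ⟨N, hN, h⟩ := h2 m hm
      refine ⟨N, hN, fun v hv => h _ ?_⟩
      obtain ⟨c, hc⟩ := hv
      refine ⟨Ideal.Quotient.mk (p : Ideal R) c, ?_⟩
      have := congrArg (Ideal.Quotient.mk (p : Ideal R)) hc
      simpa using this
  choose W i1 i2 φ h1 h2 using key
  refine ⟨∀ p, W p, inferInstance, inferInstance, MonoidHom.pi φ, ?_, ?_⟩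
  · intro v hv
    have h0 : (v : R) - 1 ∈ sInf ((⊥ : Ideal R).minimalPrimes) := by
      rw [Submodule.mem_sInf]
      intro p hp
      exact h1 ⟨p, hp⟩ v (congrFun hv ⟨p, hp⟩)
    rw [Ideal.sInf_minimalPrimes] at h0
    have h3 : IsNilpotent ((v : R) - 1) := mem_nilradical.1 h0
    apply Units.ext
    exact sub_eq_zero.1 h3.eq_zero
  · intro m hm
    choose N hN h using fun p => h2 p m hm
    refine ⟨∏ p, N p, Finset.prod_pos fun p _ => hN p, fun v hv => ?_⟩
    choose w hw using fun p => h p v (dvd_trans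
      (Nat.cast_dvd_cast (Finset.dvd_prod_of_mem N (Finset.mem_univ _))) hv)
    exact ⟨w, funext hw⟩

lemma fg_add_struct (A : Type*) [AddCommGroup A] [AddGroup.FG A] :
    ∃ (n : ℕ) (ι : Type) (_ : Fintype ι) (q : ι → ℕ) (_ : ∀ i, 0 < q i),
      Nonempty (A ≃+ (Fin n →₀ ℤ) × DirectSum ι fun i => ZMod (q i)) := by
  obtain ⟨n, ι, i1, p, hp, e, h⟩ := AddCommGroup.equiv_free_prod_directSum_zmod A
  exact ⟨n, ι, i1, fun i => p i ^ e i, fun i => pow_pos (hp i).pos _, h⟩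

lemma fg_add_divisible {A : Type*} [AddCommGroup A] [AddGroup.FG A] (a : A)
    (h : ∀ m : ℕ, 0 < m → ∃ b, a = m • b) : a = 0 := by
  obtain ⟨n, ι, _, q, hq, ⟨f⟩⟩ := fg_add_struct A
  apply f.injective
  rw [map_zero]
  refine Prod.ext ?_ ?_
  · ext j
    obtain ⟨b, hb⟩ := h ((f a).1 j).natAbs.succ (Nat.succ_pos _)
    have h1 : (f a).1 j = (((f a).1 j).natAbs.succ : ℤ) * (f b).1 j := by
      conv_lhs => rw [hb]
      simp
    have h2 : ((((f a).1 j).natAbs.succ : ℕ) : ℤ) ∣ (f a).1 j := ⟨_, h1⟩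
    refine Int.eq_zero_of_abs_lt_dvd h2 ?_
    rw [Int.abs_eq_natAbs]
    exact_mod_cast Nat.lt_succ_self _
  · refine DFinsupp.ext fun i => ?_
    obtain ⟨b, hb⟩ := h (q i) (hq i)
    have h1 : (f a).2 i = q i • (f b).2 i := by
      rw [hb, map_nsmul]; rfl
    rw [h1]
    simp

lemma fg_add_torsion (A : Type*) [AddCommGroup A] [AddGroup.FG A] :
    ∃ n : ℕ, 0 < n ∧ ∀ (k : ℕ) (a : A), 0 < k → k • a = 0 → n • a = 0 := by
  classical
  obtain ⟨n, ι, _, q, hq, ⟨f⟩⟩ := fg_add_struct A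
  refine ⟨∏ i, q i, Finset.prod_pos fun i _ => hq i, fun k a hk ha => ?_⟩
  apply f.injective
  rw [map_zero, map_nsmul]
  have h0 : k • f a = 0 := by rw [← map_nsmul, ha, map_zero]
  refine Prod.ext ?_ ?_
  · have : (f a).1 = 0 := by
      have h1 : k • (f a).1 = 0 := congrArg Prod.fst h0
      ext j
      have h2 := DFunLike.congr_fun h1 j
      simp [hk.ne'] at h2
      exact h2
    rw [Prod.smul_fst, this]; simp
  · refine DFinsupp.ext fun i => ?_
    change (∏ i, q i) • (f a).2 i = 0
    rw [nsmul_eq_mul, Nat.cast_prod, Finset.prod_eq_zero (Finset.mem_univ i), zero_mul]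
    simp

lemma fg_closed {W : Type*} [CommGroup W] [Group.FG W] (H : Subgroup W) (w : W)
    (h : ∀ m : ℕ, 0 < m → ∃ x ∈ H, ∃ z, w = x * z ^ m) : w ∈ H := by
  have : AddGroup.FG (Additive (W ⧸ H)) := inferInstance
  have h0 := fg_add_divisible (A := Additive (W ⧸ H)) (Additive.ofMul (w : W ⧸ H)) (by
    intro m hm
    obtain ⟨x, hx, z, hz⟩ := h m hm
    refine ⟨Additive.ofMul (z : W ⧸ H), ?_⟩
    rw [← ofMul_pow]
    congr 1
    rw [hz, QuotientGroup.mk_mul, QuotientGroup.mk_pow, (QuotientGroup.eq_one_iff x).2 hx, one_mul])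
  exact (QuotientGroup.eq_one_iff w).1 (congrArg Additive.toMul h0)

lemma fg_add_closed {W : Type*} [AddCommGroup W] [AddGroup.FG W] (H : AddSubgroup W) (w : W)
    (h : ∀ m : ℕ, 0 < m → ∃ x ∈ H, ∃ z, w = x + m • z) : w ∈ H :=
  fg_closed (W := Multiplicative W) (AddSubgroup.toSubgroup H) (Multiplicative.ofAdd w) h

end CS
end
end

section
open Polynomial

noncomputable section
namespace CS
universe u

lemma single_theta {R : Type*} [CommRing R] [IsReduced R] [Module.Finite ℤ R] (y : R) :
    ∃ (s : R) (n : ℤ), n ≠ 0 ∧ s * y * y = n * y := by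
  obtain ⟨p, hp, hpy⟩ := Algebra.IsIntegral.isIntegral (R := ℤ) y
  obtain ⟨q, hq, hq0⟩ := Polynomial.exists_eq_pow_rootMultiplicity_mul_and_not_dvd p hp.ne_zero 0
  set j := p.rootMultiplicity 0
  rw [C_0, sub_zero] at hq hq0
  rw [X_dvd_iff] at hq0
  have h1 : y * aeval y q = 0 := by
    have h2 : y ^ j * aeval y q = 0 := by
      have : aeval y p = 0 := hpy
      rw [hq, map_mul, map_pow, aeval_X] at this
      exact this
    have h3 : (y * aeval y q) ^ (j + 1) = 0 := by
      have : (y * aeval y q) ^ (j + 1) = (y ^ j * aeval y q) * (y * (aeval y q) ^ j) := by ring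
      rw [this, h2, zero_mul]
    exact eq_zero_of_pow_eq_zero h3
  refine ⟨- aeval y q.divX, q.coeff 0, hq0, ?_⟩
  have h4 : aeval y q = aeval y q.divX * y + (q.coeff 0 : R) := by
    conv_lhs => rw [← Polynomial.divX_mul_X_add q]
    simp
  rw [h4] at h1
  linear_combination -h1

lemma exists_theta {R : Type*} [CommRing R] [IsReduced R] [Module.Finite ℤ R] (I : Ideal R) :
    ∃ θ ∈ I, ∃ n : ℤ, n ≠ 0 ∧ ∀ y ∈ I, θ * y = n * y := by
  have : IsNoetherianRing R := isNoetherian_of_tower ℤ inferInstance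
  have hI : I.FG := (isNoetherianRing_iff_ideal_fg R).1 inferInstance I
  induction I, hI using Submodule.fg_induction with
  | singleton y =>
    obtain ⟨s, n, hn, h⟩ := single_theta y
    refine ⟨s * y, Ideal.mul_mem_left _ _ (Ideal.mem_span_singleton_self y), n, hn, ?_⟩
    intro x hx
    obtain ⟨c, rfl⟩ := Ideal.mem_span_singleton.1 hx
    linear_combination c * h
  | sup I J _ _ hI hJ =>
    obtain ⟨θ₁, h₁, n₁, hn₁, H₁⟩ := hI
    obtain ⟨θ₂, h₂, n₂, hn₂, H₂⟩ := hJ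
    refine ⟨n₂ * θ₁ + n₁ * θ₂ - θ₁ * θ₂, ?_, n₁ * n₂, mul_ne_zero hn₁ hn₂, ?_⟩
    · refine sub_mem (add_mem ?_ ?_) ?_
      · exact Ideal.mul_mem_left _ _ (Ideal.mem_sup_left h₁)
      · exact Ideal.mul_mem_left _ _ (Ideal.mem_sup_right h₂)
      · exact Ideal.mul_mem_left _ _ (Ideal.mem_sup_right h₂)
    · intro y hy
      obtain ⟨a, ha, b, hb, rfl⟩ := Submodule.mem_sup.1 hy
      have e1 := H₁ a ha
      have e2 := H₂ b hb
      push_cast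
      linear_combination (n₂ - θ₂) * e1 + (n₁ - θ₁) * e2

section
variable {R : Type u} {B C : Type*} [Ring R] [AddCommGroup B] [Module R B] [Group C]

lemma fin_index (ρ : C →* Rˣ) (δ : C → B)
    (hδ : ∀ g h, δ (g * h) = δ g + (ρ g : R) • δ h) (C2 : Subgroup C) [C2.FiniteIndex]
    (hC2 : ∀ a, (∀ m : ℕ, 0 < m → ∃ c ∈ C2, ∃ z, a = δ c + m • z) → ∃ c, δ c = a) (a : B)
    (h : ∀ m : ℕ, 0 < m → ∃ c z, a = δ c + m • z) : ∃ c, δ c = a := by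
  classical
  have := Fintype.ofFinite (C ⧸ C2)
  have h1 : ∃ q : C ⧸ C2, ∀ m : ℕ, 0 < m → ∃ c : C, (c : C ⧸ C2) = q ∧ ∃ z, a = δ c + m • z := by
    by_contra! hcon
    choose m hm hbad using hcon
    obtain ⟨c, z, hz⟩ := h (∏ q, m q) (Finset.prod_pos fun q _ => hm q)
    obtain ⟨k, hk⟩ := Finset.dvd_prod_of_mem m (Finset.mem_univ (c : C ⧸ C2))
    apply hbad c c rfl (k • z)
    rw [smul_smul, ← hk, hz]
  obtain ⟨q, hq⟩ := h1
  obtain ⟨c0, rfl⟩ := QuotientGroup.mk_surjective q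
  obtain ⟨c, hc⟩ := hC2 ((((ρ c0)⁻¹ : Rˣ) : R) • (a - δ c0)) (by
    intro m hm
    obtain ⟨c, hc, z, hz⟩ := hq m hm
    refine ⟨c0⁻¹ * c, QuotientGroup.eq.1 hc.symm, (((ρ c0)⁻¹ : Rˣ) : R) • z, ?_⟩
    have h2 : δ c = δ c0 + (ρ c0 : R) • δ (c0⁻¹ * c) := by
      rw [← hδ, mul_inv_cancel_left]
    rw [hz, h2, add_assoc, add_sub_cancel_left, smul_add, smul_smul, Units.inv_mul, one_smul,
      smul_comm m])
  refine ⟨c0 * c, ?_⟩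
  rw [hδ, hc, smul_smul, Units.mul_inv, one_smul]
  abel

end

section
variable {R : Type u} {B C : Type*} [CommRing R] [AddCommGroup B] [Module R B] [Group C]

lemma core [IsReduced R] [Module.Finite ℤ R] [Module.Finite ℤ B]
    (htf : ∀ (n : ℕ) (b : B), 0 < n → n • b = 0 → b = 0) (ρ : C →* Rˣ) (δ : C → B)
    (hδ : ∀ g h, δ (g * h) = δ g + (ρ g : R) • δ h)
    (hcomm : ∀ g h, ((ρ g : R) - 1) • δ h = ((ρ h : R) - 1) • δ g) (a : B)
    (h : ∀ m : ℕ, 0 < m → ∃ c z, a = δ c + m • z) : ∃ c, δ c = a := by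
  have fgB : AddGroup.FG B := Module.Finite.iff_addGroup_fg.1 inferInstance
  have htfz : ∀ (n : ℤ) (b : B), n ≠ 0 → (n : R) • b = 0 → b = 0 := by
    intro n b hn hb
    refine htf n.natAbs b (Int.natAbs_pos.2 hn) ?_
    rw [Int.cast_smul_eq_zsmul] at hb
    rcases Int.natAbs_eq n with h1 | h1
    · rw [h1] at hb; simpa using hb
    · rw [h1] at hb; simpa using hb
  let I : Ideal R := Ideal.span (Set.range fun c => (ρ c : R) - 1)
  have hI : ∀ c, (ρ c : R) - 1 ∈ I := fun c => Ideal.subset_span ⟨c, rfl⟩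
  obtain ⟨θ, hθ, n, hn, hθn⟩ := exists_theta I
  have he : ∀ x ∈ I, ∃ e : B, ∀ v, ((ρ v : R) - 1) • e = x • δ v := by
    intro x hx
    induction hx using Submodule.span_induction with
    | mem x hx =>
      obtain ⟨c, rfl⟩ := hx
      exact ⟨δ c, fun v => hcomm v c⟩
    | zero => exact ⟨0, by simp⟩
    | add x y _ _ hx hy =>
      obtain ⟨e, he⟩ := hx
      obtain ⟨e', he'⟩ := hy
      exact ⟨e + e', fun v => by rw [smul_add, he, he', add_smul]⟩
    | smul r x _ hx =>
      obtain ⟨e, he⟩ := hx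
      exact ⟨r • e, fun v => by rw [smul_comm, he, smul_eq_mul, mul_smul]⟩
  obtain ⟨e, he⟩ := he θ hθ
  let φ : C →* Multiplicative B := MonoidHom.mk' (fun v => Multiplicative.ofAdd (((n : R) - θ) • δ v)) (by
    intro v w
    rw [← ofAdd_add]
    congr 1
    have h1 := hθn _ (hI v)
    have h2 : ((n : R) - θ) * (ρ v : R) = (n : R) - θ := by linear_combination -h1
    rw [hδ, smul_add, smul_smul, h2])
  have hφ : ∀ v, (φ v).toAdd = ((n : R) - θ) • δ v := fun v => rfl
  let f := θ • a + e
  let t := ((n : R) - θ) • a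
  have hf : ∀ (v : C) (m : ℕ) (z : B), a = δ v + m • z → f = (ρ v : R) • e + m • (θ • z) := by
    intro v m z hz
    simp only [f]
    conv_lhs => rw [hz]
    rw [smul_add, ← he, sub_smul, one_smul, smul_comm θ m]
    abel
  have ht : ∀ (v : C) (m : ℕ) (z : B), a = δ v + m • z →
      t = (φ v).toAdd + m • (((n : R) - θ) • z) := by
    intro v m z hz
    simp only [t]
    conv_lhs => rw [hz]
    rw [smul_add, hφ, smul_comm m]
  have hfe : f ∈ Submodule.span R {e} := by
    refine fg_add_closed (Submodule.span R {e}).toAddSubgroup f fun m hm => ?_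
    obtain ⟨v, z, hz⟩ := h m hm
    exact ⟨_, Submodule.smul_mem _ (ρ v : R) (Submodule.mem_span_singleton_self e), _, hf v m z hz⟩
  have hef : e ∈ Submodule.span R {f} := by
    refine fg_add_closed (Submodule.span R {f}).toAddSubgroup e fun m hm => ?_
    obtain ⟨v, z, hz⟩ := h m hm
    refine ⟨_, Submodule.smul_mem _ (((ρ v)⁻¹ : Rˣ) : R) (Submodule.mem_span_singleton_self f),
      -((((ρ v)⁻¹ : Rˣ) : R) • θ • z), ?_⟩
    rw [hf v m z hz, smul_add, smul_smul, Units.inv_mul, one_smul, smul_neg,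
      smul_comm m (((ρ v)⁻¹ : Rˣ) : R), add_neg_cancel_right]
  obtain ⟨r, hr⟩ := Submodule.mem_span_singleton.1 hfe
  obtain ⟨s, hs⟩ := Submodule.mem_span_singleton.1 hef
  let J : Ideal R := Ideal.torsionOf R B e
  have hJ : ∀ x, x ∈ J ↔ x • e = 0 := fun x => Ideal.mem_torsionOf_iff e x
  let π : R →+* R ⧸ J := Ideal.Quotient.mk J
  have hπ : ∀ x y : R, π x = π y ↔ x • e = y • e := by
    intro x y
    rw [Ideal.Quotient.eq, hJ, sub_smul, sub_eq_zero]
  have hred : IsReduced (R ⧸ J) := by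
    rw [isReduced_iff_pow_one_lt 2 one_lt_two]
    intro x hx
    obtain ⟨x, rfl⟩ := Ideal.Quotient.mk_surjective x
    rw [← map_pow, Ideal.Quotient.eq_zero_iff_mem, hJ] at hx
    rw [Ideal.Quotient.eq_zero_iff_mem, hJ]
    obtain ⟨s, k, hk, hs⟩ := single_theta x
    apply htfz k _ hk
    rw [smul_smul, ← hs, mul_assoc, mul_smul, ← sq, hx, smul_zero]
  have hfinJ : Module.Finite ℤ (R ⧸ J) :=
    Module.Finite.of_surjective π.toAddMonoidHom.toIntLinearMap Ideal.Quotient.mk_surjective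
  have htfJ : ∀ (n : ℤ) (x : R ⧸ J), n ≠ 0 → (n : R ⧸ J) * x = 0 → x = 0 := by
    intro k x hk hx
    obtain ⟨x, rfl⟩ := Ideal.Quotient.mk_surjective x
    rw [← map_intCast (Ideal.Quotient.mk J), ← map_mul, Ideal.Quotient.eq_zero_iff_mem, hJ] at hx
    rw [Ideal.Quotient.eq_zero_iff_mem, hJ]
    apply htfz k _ hk
    rw [smul_smul, hx]
  have hrs : π r * π s = 1 := by
    rw [← map_mul, ← map_one π, hπ, mul_comm, mul_smul, hr, hs, one_smul]
  let rb : (R ⧸ J)ˣ := ⟨π r, π s, hrs, by rw [mul_comm]; exact hrs⟩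
  let ρb : C →* (R ⧸ J)ˣ := (Units.map (π : R →* R ⧸ J)).comp ρ
  have : Module.Finite ℤ (B ⧸ Submodule.span R {e}) :=
      Module.Finite.of_surjective ((Submodule.span R {e}).mkQ.toAddMonoidHom.toIntLinearMap)
        (Submodule.span R {e}).mkQ_surjective
  have : AddGroup.FG (B ⧸ Submodule.span R {e}) := Module.Finite.iff_addGroup_fg.1 inferInstance
  obtain ⟨k, hk, hk'⟩ := fg_add_torsion (B ⧸ Submodule.span R {e})
  have happ : ∀ m : ℕ, 0 < m → ∃ (v : C) (x : R ⧸ J) (z : B),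
      (rb : R ⧸ J) = ρb v + m * x ∧ t = (φ v).toAdd + m • z := by
    intro m hm
    obtain ⟨v, z, hz⟩ := h (m * k) (by positivity)
    have h1 := hf v _ z hz
    have h2 := ht v _ z hz
    have h3 : (m * k) • (θ • z) ∈ Submodule.span R {e} := by
      have : (m * k) • (θ • z) = (r - ρ v : R) • e := by
        rw [sub_smul, hr, h1]; abel
      rw [this]
      exact Submodule.smul_mem _ _ (Submodule.mem_span_singleton_self e)
    have h4 : k • (θ • z) ∈ Submodule.span R {e} := by
      have := hk' m (Submodule.Quotient.mk (k • (θ • z))) hm (by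
        rw [← Submodule.Quotient.mk_smul, Submodule.Quotient.mk_eq_zero, smul_smul]
        exact h3)
      have h5 := hk' (m * k) (Submodule.Quotient.mk (θ • z)) (by positivity) (by
        rw [← Submodule.Quotient.mk_smul, Submodule.Quotient.mk_eq_zero]
        exact h3)
      rwa [← Submodule.Quotient.mk_smul, Submodule.Quotient.mk_eq_zero] at h5
    obtain ⟨x, hx⟩ := Submodule.mem_span_singleton.1 h4
    refine ⟨v, π x, k • (((n : R) - θ) • z), ?_, ?_⟩
    · change π r = π (ρ v) + m * π x
      rw [← map_natCast π, ← map_mul, ← map_add, hπ, add_smul, mul_smul, hx, hr, h1,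
        Nat.cast_smul_eq_nsmul, smul_smul]
    · rw [h2, smul_smul]
  obtain ⟨W, i1, i2, ι, hι, hW⟩ := exists_unit_hom (R ⧸ J) htfJ
  have : Group.FG (Multiplicative B) := inferInstance
  let Φ : C →* W × Multiplicative B := (ι.comp ρb).prod φ
  have hmem : ((ι rb, Multiplicative.ofAdd t) : W × Multiplicative B) ∈ Φ.range := by
    refine fg_closed _ _ fun m hm => ?_
    obtain ⟨N, hN, hN'⟩ := hW m hm
    obtain ⟨v, x, z, h1, h2⟩ := happ (m * N) (by positivity)
    obtain ⟨w, hw⟩ := hN' (rb * (ρb v)⁻¹) (by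
      refine ⟨m * x * ((ρb v)⁻¹ : (R ⧸ J)ˣ), ?_⟩
      rw [Units.val_mul, h1, add_mul, Units.mul_inv]
      push_cast
      ring)
    refine ⟨Φ v, ⟨v, rfl⟩, (w, Multiplicative.ofAdd (N • z)), ?_⟩
    refine Prod.ext ?_ ?_
    · change ι rb = ι (ρb v) * w ^ m
      rw [← hw, ← map_mul, mul_comm rb, mul_inv_cancel_left]
    · change Multiplicative.ofAdd t = φ v * (Multiplicative.ofAdd (N • z)) ^ m
      rw [← ofAdd_nsmul, smul_smul, h2]
      rfl
  obtain ⟨v, hv⟩ := hmem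
  refine ⟨v, ?_⟩
  have h1 : ι (ρb v) = ι rb := congrArg Prod.fst hv
  have h2 : φ v = Multiplicative.ofAdd t := congrArg Prod.snd hv
  have h3 : ρb v = rb := by
    rw [← div_eq_one]
    apply hι
    rw [_root_.map_div, h1, div_self']
  have h4 : (ρ v : R) • e = f := by
    rw [← hr, ← hπ]
    exact congrArg Units.val h3
  have h5 : ((n : R) - θ) • δ v = ((n : R) - θ) • a := by
    rw [← hφ, h2]; rfl
  have h6 : θ • δ v = θ • a := by
    rw [← he, sub_smul, h4, one_smul]
    simp only [f]
    abel
  rw [← sub_eq_zero]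
  apply htfz n _ hn
  have h7 : (n : R) • δ v = (n : R) • a := by
    have := congrArg₂ (· + ·) h5 h6
    simpa [← add_smul] using this
  rw [smul_sub, h7, sub_self]

lemma delta_one (ρ : C →* Rˣ) (δ : C → B)
    (hδ : ∀ g h, δ (g * h) = δ g + (ρ g : R) • δ h) : δ 1 = 0 := by
  have := hδ 1 1
  simpa using this

lemma delta_inv (ρ : C →* Rˣ) (δ : C → B)
    (hδ : ∀ g h, δ (g * h) = δ g + (ρ g : R) • δ h) (c : C) :
    δ c⁻¹ = - ((((ρ c)⁻¹ : Rˣ) : R) • δ c) := by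
  have := hδ c⁻¹ c
  rw [inv_mul_cancel, delta_one ρ δ hδ, map_inv] at this
  exact eq_neg_of_add_eq_zero_left this.symm

lemma core2 [IsReduced R] [Module.Finite ℤ R] [Module.Finite ℤ B]
    (ρ : C →* Rˣ) (δ : C → B)
    (hδ : ∀ g h, δ (g * h) = δ g + (ρ g : R) • δ h)
    (hcomm : ∀ g h, ((ρ g : R) - 1) • δ h = ((ρ h : R) - 1) • δ g) (a : B)
    (h : ∀ m : ℕ, 0 < m → ∃ c z, a = δ c + m • z) : ∃ c, δ c = a := by
  have fgB : AddGroup.FG B := Module.Finite.iff_addGroup_fg.1 inferInstance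
  obtain ⟨n, hn, hn'⟩ := fg_add_torsion B
  let B' : Submodule R B := LinearMap.range (LinearMap.lsmul R B (n : R))
  have hB' : ∀ b, b ∈ B' ↔ ∃ z, n • z = b := by
    intro b
    simp [B', Nat.cast_smul_eq_nsmul]
  have hfin : Finite (B ⧸ B') := by
    have : Module.Finite ℤ (B ⧸ B') :=
      Module.Finite.of_surjective (B'.mkQ.toAddMonoidHom.toIntLinearMap) B'.mkQ_surjective
    have : AddGroup.FG (B ⧸ B') := Module.Finite.iff_addGroup_fg.1 inferInstance
    refine AddCommGroup.finite_of_fg_torsion _ ?_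
    intro x
    obtain ⟨x, rfl⟩ := B'.mkQ_surjective x
    rw [isOfFinAddOrder_iff_nsmul_eq_zero]
    refine ⟨n, hn, ?_⟩
    rw [← map_nsmul]
    exact (Submodule.Quotient.mk_eq_zero _).2 ((hB' _).2 ⟨x, rfl⟩)
  let C2 : Subgroup C :=
    { carrier := {c | δ c ∈ B'}
      one_mem' := by
        change δ 1 ∈ B'
        rw [delta_one ρ δ hδ]; exact zero_mem _
      mul_mem' := by
        intro x y hx hy
        change δ (x * y) ∈ B'
        rw [hδ]
        exact add_mem hx (B'.smul_mem _ hy)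
      inv_mem' := by
        intro x hx
        change δ x⁻¹ ∈ B'
        rw [delta_inv ρ δ hδ]
        exact neg_mem (B'.smul_mem _ hx) }
  have : C2.FiniteIndex := by
    have : Finite (C ⧸ C2) := by
      refine Finite.of_injective (fun q : C ⧸ C2 => B'.mkQ (δ q.out)) ?_
      intro q q2 hqq
      have h1 : δ q.out - δ q2.out ∈ B' := (Submodule.Quotient.eq B').1 hqq
      rw [← QuotientGroup.out_eq' q, ← QuotientGroup.out_eq' q2, QuotientGroup.eq]
      change δ (q.out⁻¹ * q2.out) ∈ B'
      rw [hδ, delta_inv ρ δ hδ, map_inv, ← smul_neg, ← smul_add]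
      apply B'.smul_mem
      rw [← neg_mem_iff]
      convert h1 using 1
      abel
    exact Subgroup.finiteIndex_of_finite_quotient
  refine fin_index ρ δ hδ C2 ?_ a h
  intro a ha
  have haB : a ∈ B' := by
    obtain ⟨c, hc, z, hz⟩ := ha n hn
    rw [hz]
    exact add_mem hc ((hB' _).2 ⟨z, rfl⟩)
  have : Module.Finite ℤ B' := by
    have : IsNoetherian ℤ B := inferInstance
    exact Module.Finite.of_injective B'.subtype.toAddMonoidHom.toIntLinearMap
      B'.subtype_injective
  obtain ⟨c, hc⟩ := core (R := R) (B := B') (C := C2) (by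
      rintro k ⟨b, hb⟩ hk hkb
      obtain ⟨z, rfl⟩ := (hB' _).1 hb
      have h1 : k • n • z = 0 := congrArg Subtype.val hkb
      rw [smul_smul] at h1
      exact Subtype.ext (hn' _ _ (by positivity) h1)) (ρ.comp C2.subtype)
    (fun c => ⟨δ c, c.2⟩) (by
      intro g h
      exact Subtype.ext (hδ g h)) (by
      intro g h
      exact Subtype.ext (hcomm g h)) ⟨a, haB⟩ (by
      intro m hm
      obtain ⟨c, hc, z, hz⟩ := ha (m * n) (by positivity)
      refine ⟨⟨c, hc⟩, ⟨n • z, (hB' _).2 ⟨z, rfl⟩⟩, ?_⟩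
      apply Subtype.ext
      change a = δ c + m • n • z
      rw [smul_smul, hz])
  exact ⟨c, congrArg Subtype.val hc⟩

theorem lemma_star [IsReduced R] [Module.Finite ℤ R] [Module.Finite ℤ B]
    (ρ : C →* Rˣ) (hgen : AddSubgroup.closure (Set.range fun c => (ρ c : R)) = ⊤) (δ : C → B)
    (hδ : ∀ g h, δ (g * h) = δ g + (ρ g : R) • δ h) (a : B)
    (h : ∀ m : ℕ, 0 < m → ∃ c z, a = δ c + m • z) : ∃ c, δ c = a := by
  let D0 : AddSubgroup B :=
    { carrier := {b | ∃ l ∈ ρ.ker, δ l = b}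
      zero_mem' := ⟨1, one_mem _, delta_one ρ δ hδ⟩
      add_mem' := by
        rintro x y ⟨l, hl, rfl⟩ ⟨l', hl', rfl⟩
        refine ⟨l * l', mul_mem hl hl', ?_⟩
        rw [hδ, MonoidHom.mem_ker.1 hl, Units.val_one, one_smul]
      neg_mem' := by
        rintro x ⟨l, hl, rfl⟩
        refine ⟨l⁻¹, inv_mem hl, ?_⟩
        rw [delta_inv ρ δ hδ, MonoidHom.mem_ker.1 hl, inv_one, Units.val_one, one_smul] }
  have hconj : ∀ c, ∀ b ∈ D0, (ρ c : R) • b ∈ D0 := by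
    rintro c b ⟨l, hl, rfl⟩
    refine ⟨c * l * c⁻¹, (MonoidHom.normal_ker ρ).conj_mem l hl c, ?_⟩
    rw [hδ, hδ, delta_inv ρ δ hδ, map_mul, MonoidHom.mem_ker.1 hl, mul_one, smul_neg, smul_smul,
      Units.mul_inv, one_smul]
    abel
  let D : Submodule R B :=
    { D0 with
      smul_mem' := by
        intro r b hb
        have hr : r ∈ AddSubgroup.closure (Set.range fun c => (ρ c : R)) := by rw [hgen]; trivial
        change r • b ∈ D0
        induction hr using AddSubgroup.closure_induction with
        | mem x hx =>
          obtain ⟨c, rfl⟩ := hx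
          exact hconj c b hb
        | zero => rw [zero_smul]; exact zero_mem _
        | add x y _ _ hx hy => rw [add_smul]; exact add_mem hx hy
        | neg x _ hx => rw [neg_smul]; exact neg_mem hx }
  have hD : ∀ l ∈ ρ.ker, δ l ∈ D := fun l hl => ⟨l, hl, rfl⟩
  have : Module.Finite ℤ (B ⧸ D) :=
      Module.Finite.of_surjective (D.mkQ.toAddMonoidHom.toIntLinearMap) D.mkQ_surjective
  obtain ⟨c, hc⟩ := core2 (R := R) (B := B ⧸ D) ρ (fun c => D.mkQ (δ c)) (by
      intro g h
      rw [hδ, map_add, map_smul]) (by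
      intro g h
      rw [← map_smul, ← map_smul]
      refine (Submodule.Quotient.eq D).2 ?_
      have h1 : g * h = (g * h * g⁻¹ * h⁻¹) * (h * g) := by group
      have h2 : g * h * g⁻¹ * h⁻¹ ∈ ρ.ker := by
        rw [MonoidHom.mem_ker]
        simp
      have h3 : δ (g * h) = δ (g * h * g⁻¹ * h⁻¹) + δ (h * g) := by
        conv_lhs => rw [h1]
        rw [hδ, MonoidHom.mem_ker.1 h2, Units.val_one, one_smul]
      rw [hδ g h, hδ h g] at h3
      have h4 : ((ρ g : R) - 1) • δ h - ((ρ h : R) - 1) • δ g = δ (g * h * g⁻¹ * h⁻¹) := by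
        rw [sub_smul, sub_smul, one_smul, one_smul]
        have := sub_eq_zero.2 h3
        rw [← sub_eq_zero, ← this]
        abel
      rw [h4]
      exact hD _ h2) (D.mkQ a) (by
      intro m hm
      obtain ⟨c, z, hz⟩ := h m hm
      exact ⟨c, D.mkQ z, by rw [← map_nsmul, ← map_add, hz]⟩)
  have h1 : a - δ c ∈ D := (Submodule.Quotient.eq D).1 hc.symm
  obtain ⟨l, hl, hl'⟩ := D.smul_mem (((ρ c)⁻¹ : Rˣ) : R) h1
  refine ⟨c * l, ?_⟩
  rw [hδ, hl', smul_smul, Units.mul_inv, one_smul]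
  abel

end
end CS
end
end

section
namespace CS

section
open scoped commutatorElement
variable {G : Type*} [Group G]

inductive PC : Subgroup G → Prop
  | bot : PC ⊥
  | step (H : Subgroup G) (x : G) (hH : PC H) (hx : x ∈ Subgroup.normalizer (H : Set G)) :
      PC (H ⊔ Subgroup.zpowers x)

lemma mem_step {H : Subgroup G} {x : G} (hx : x ∈ Subgroup.normalizer (H : Set G)) {k : G} :
    k ∈ H ⊔ Subgroup.zpowers x ↔ ∃ h ∈ H, ∃ j : ℤ, k = h * x ^ j := by
  have h1 := Subgroup.coe_mul_of_right_le_normalizer_left H (Subgroup.zpowers x)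
    (by rwa [Subgroup.zpowers_le])
  rw [← SetLike.mem_coe, h1, Set.mem_mul]
  constructor
  · rintro ⟨a, ha, b, ⟨j, rfl⟩, rfl⟩
    exact ⟨a, ha, j, rfl⟩
  · rintro ⟨h, hh, j, rfl⟩
    exact ⟨h, hh, _, ⟨j, rfl⟩, rfl⟩

lemma zpow_conj_mem {H : Subgroup G} {x : G} (hx : x ∈ Subgroup.normalizer (H : Set G)) (j : ℤ)
    {h : G} (hh : h ∈ H) : x ^ j * h * (x ^ j)⁻¹ ∈ H :=
  (Subgroup.mem_normalizer_iff.1 (zpow_mem hx j) h).1 hh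

lemma zpow_conj_mem' {H : Subgroup G} {x : G} (hx : x ∈ Subgroup.normalizer (H : Set G)) (j : ℤ)
    {h : G} (hh : h ∈ H) : (x ^ j)⁻¹ * h * x ^ j ∈ H :=
  (Subgroup.mem_normalizer_iff''.1 (zpow_mem hx j) h).1 hh

lemma zpow_quot_mem {H : Subgroup G} {z y : G} (hz : z ∈ Subgroup.normalizer (H : Set G))
    (hy : z * y⁻¹ ∈ H) (k : ℤ) : z ^ k * (y ^ k)⁻¹ ∈ H := by
  induction k using Int.induction_on with
  | zero => simp
  | succ i ih =>
    have e : z ^ ((i : ℤ) + 1) * (y ^ ((i : ℤ) + 1))⁻¹ =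
        (z ^ (i : ℤ) * (z * y⁻¹) * (z ^ (i : ℤ))⁻¹) * (z ^ (i : ℤ) * (y ^ (i : ℤ))⁻¹) := by
      group
    rw [e]
    exact mul_mem (zpow_conj_mem hz _ hy) ih
  | pred i ih =>
    have e : z ^ (-(i : ℤ) - 1) * (y ^ (-(i : ℤ) - 1))⁻¹ =
        (z ^ (-(i : ℤ) - 1) * (z * y⁻¹)⁻¹ * (z ^ (-(i : ℤ) - 1))⁻¹) *
          (z ^ (-(i : ℤ)) * (y ^ (-(i : ℤ)))⁻¹) := by
      group
    rw [e]
    exact mul_mem (zpow_conj_mem hz _ (inv_mem hy)) ih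

lemma pc_top (hG : IsPolycyclic G) : PC (⊤ : Subgroup G) := by
  obtain ⟨n, s, h0, hl, hs⟩ := hG
  have key : ∀ i : Fin (n + 1), PC (s i) := by
    intro i
    induction i using Fin.induction with
    | zero => rw [h0]; exact PC.bot
    | succ i ih =>
      obtain ⟨hle, hn, x, hx⟩ := hs i
      have h1 : s i.succ = s i.castSucc ⊔ Subgroup.zpowers (x : G) := by
        have := congrArg (Subgroup.map (s i.succ).subtype) hx
        rw [Subgroup.map_sup, Subgroup.subgroupOf_map_subtype, MonoidHom.map_zpowers,
          ← MonoidHom.range_eq_map, Subgroup.range_subtype, inf_of_le_left hle] at this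
        exact this.symm
      rw [h1]
      refine PC.step _ _ ih ?_
      have h2 := (Subgroup.normal_subgroupOf_iff_le_normalizer hle).1 hn
      exact h2 x.2
  rw [← hl]
  exact key _

lemma pc_map {G' : Type*} [Group G'] (f : G →* G') {H : Subgroup G} (hH : PC H) :
    PC (H.map f) := by
  induction hH with
  | bot => rw [Subgroup.map_bot]; exact PC.bot
  | step H x hH hx ih =>
    rw [Subgroup.map_sup, MonoidHom.map_zpowers]
    refine PC.step _ _ ih ?_
    exact Subgroup.le_normalizer_map f ⟨x, hx, rfl⟩

lemma pc_fg {K : Subgroup G} (hK : PC K) : ∀ L ≤ K, L.FG := by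
  induction hK with
  | bot =>
    intro L hL
    rw [le_bot_iff.1 hL]
    exact ⟨∅, by simp⟩
  | step H x hH hx ih =>
    intro L hL
    let S : AddSubgroup ℤ :=
      { carrier := {j | ∃ h ∈ H, h * x ^ j ∈ L}
        zero_mem' := ⟨1, one_mem _, by simp⟩
        add_mem' := by
          rintro i j ⟨h, hh, hi⟩ ⟨h', hh', hj⟩
          refine ⟨h * (x ^ i * h' * (x ^ i)⁻¹), mul_mem hh (zpow_conj_mem hx i hh'), ?_⟩
          have : h * (x ^ i * h' * (x ^ i)⁻¹) * x ^ (i + j) = (h * x ^ i) * (h' * x ^ j) := by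
            rw [zpow_add]; group
          rw [this]
          exact mul_mem hi hj
        neg_mem' := by
          rintro i ⟨h, hh, hi⟩
          refine ⟨(x ^ i)⁻¹ * h⁻¹ * x ^ i, zpow_conj_mem' hx i (inv_mem hh), ?_⟩
          have : (x ^ i)⁻¹ * h⁻¹ * x ^ i * x ^ (-i) = (h * x ^ i)⁻¹ := by group
          rw [this]
          exact inv_mem hi }
    obtain ⟨g, hg⟩ := Int.subgroup_cyclic S
    have hgS : g ∈ S := by rw [hg]; exact AddSubgroup.subset_closure rfl
    obtain ⟨h0, hh0, hl0⟩ := hgS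
    have hL' : L = (L ⊓ H) ⊔ Subgroup.zpowers (h0 * x ^ g) := by
      apply le_antisymm
      · intro l hl
        obtain ⟨h, hh, j, rfl⟩ := (mem_step hx).1 (hL hl)
        have hj : j ∈ S := ⟨h, hh, hl⟩
        rw [hg, AddSubgroup.mem_closure_singleton] at hj
        obtain ⟨k, rfl⟩ := hj
        have h1 : (h * x ^ (k • g)) = (h * x ^ (k • g)) * ((h0 * x ^ g) ^ k)⁻¹ * (h0 * x ^ g) ^ k := by
          group
        have h2 : x ^ (k • g) * ((h0 * x ^ g) ^ k)⁻¹ ∈ H := by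
          have e := zpow_quot_mem (zpow_mem hx g) (y := h0 * x ^ g) (by
            have : x ^ g * (h0 * x ^ g)⁻¹ = h0⁻¹ := by group
            rw [this]; exact inv_mem hh0) k
          rwa [← zpow_mul, mul_comm g k, ← smul_eq_mul] at e
        rw [h1]
        refine mul_mem (Subgroup.mem_sup_left ⟨?_, ?_⟩)
          (Subgroup.mem_sup_right ⟨k, rfl⟩)
        · exact L.mul_mem hl (L.inv_mem (L.zpow_mem hl0 k))
        · rw [mul_assoc]
          exact mul_mem hh h2
      · exact sup_le inf_le_left (by rwa [Subgroup.zpowers_le])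
    rw [hL']
    refine Subgroup.FG.sup (ih _ inf_le_right) ?_
    exact ⟨{h0 * x ^ g}, by rw [Finset.coe_singleton, Subgroup.zpowers_eq_closure]⟩

lemma pc_solv {K : Subgroup G} (hK : PC K) :
    ∃ n, (fun L : Subgroup G => ⁅L, L⁆)^[n] K = ⊥ := by
  induction hK with
  | bot => exact ⟨0, rfl⟩
  | step H x hH hx ih =>
    obtain ⟨n, hn⟩ := ih
    refine ⟨n + 1, ?_⟩
    rw [Function.iterate_succ_apply, ← le_bot_iff, ← hn]
    have hmono : Monotone (fun L : Subgroup G => ⁅L, L⁆) := fun a b h =>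
      Subgroup.commutator_mono h h
    refine hmono.iterate n ?_
    rw [Subgroup.commutator_le]
    intro a ha b hb
    obtain ⟨h, hh, i, rfl⟩ := (mem_step hx).1 ha
    obtain ⟨h', hh', j, rfl⟩ := (mem_step hx).1 hb
    have : ⁅h * x ^ i, h' * x ^ j⁆ =
        h * (x ^ i * h' * (x ^ i)⁻¹) * (x ^ j * h⁻¹ * (x ^ j)⁻¹) * h'⁻¹ := by
      rw [commutatorElement_def]; group
    rw [this]
    exact mul_mem (mul_mem (mul_mem hh (zpow_conj_mem hx i hh'))
      (zpow_conj_mem hx j (inv_mem hh))) (inv_mem hh')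

lemma pc_derived (hG : PC (⊤ : Subgroup G)) : ∃ n, derivedSeries G n = ⊥ := by
  obtain ⟨n, hn⟩ := pc_solv hG
  refine ⟨n, ?_⟩
  rw [← hn]
  clear hn
  induction n with
  | zero => rfl
  | succ n ih => rw [derivedSeries_succ, ih, Function.iterate_succ_apply']

lemma exists_char {H : Type*} [Group H] [hfg : Group.FG H] (H1 : Subgroup H) [H1.FiniteIndex] :
    ∃ N : Subgroup H, N ≤ H1 ∧ N.FiniteIndex ∧ N.Characteristic := by
  have hfin : Finite (H →* Equiv.Perm (H ⧸ H1)) := by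
    obtain ⟨S, hS⟩ := hfg.out
    refine Finite.of_injective (fun f : H →* Equiv.Perm (H ⧸ H1) => fun s : S => f s) ?_
    intro f g hfg
    refine MonoidHom.eq_of_eqOn_dense hS ?_
    intro s hs
    exact congrFun hfg ⟨s, hs⟩
  refine ⟨⨅ f : H →* Equiv.Perm (H ⧸ H1), f.ker, ?_, ?_, ?_⟩
  · refine (iInf_le _ (MulAction.toPermHom H (H ⧸ H1))).trans ?_
    rw [← Subgroup.normalCore_eq_ker]
    exact Subgroup.normalCore_le _
  · exact Subgroup.finiteIndex_iInf fun f => inferInstance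
  · rw [Subgroup.characteristic_iff_le_comap]
    intro φ x hx
    rw [Subgroup.mem_comap, Subgroup.mem_iInf]
    rw [Subgroup.mem_iInf] at hx
    intro f
    exact hx (f.comp φ.toMonoidHom)

end
end CS
end

section
namespace CS

section
variable {G : Type*} [Group G]

lemma cover_fi {K1 K : Subgroup G} (T : Set G) (hT : T.Finite)
    (h : ∀ k ∈ K, ∃ t ∈ T, t⁻¹ * k ∈ K1) : (K1.subgroupOf K).FiniteIndex := by
  have : Finite T := hT
  choose t ht htk using h
  have : Finite (K ⧸ K1.subgroupOf K) := by
    refine Finite.of_injective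
      (fun q : K ⧸ K1.subgroupOf K => (⟨t q.out.1 q.out.2, ht _ _⟩ : T)) ?_
    intro p q hpq
    have e : t p.out.1 p.out.2 = t q.out.1 q.out.2 := congrArg Subtype.val hpq
    rw [← p.out_eq', ← q.out_eq', QuotientGroup.eq, Subgroup.mem_subgroupOf]
    have h1 := htk p.out.1 p.out.2
    have h2 := htk q.out.1 q.out.2
    rw [e] at h1
    have := K1.mul_mem (K1.inv_mem h1) h2
    simpa [mul_assoc] using this
  exact Subgroup.finiteIndex_of_finite_quotient

lemma fi_cover {H : Subgroup G} (N : Subgroup H) [N.FiniteIndex] :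
    ∃ T : Set G, T.Finite ∧ T ⊆ H ∧ ∀ k ∈ H, ∃ t ∈ T, t⁻¹ * k ∈ N.map H.subtype := by
  have : Finite (H ⧸ N) := Subgroup.finite_quotient_of_finiteIndex
  refine ⟨Set.range fun q : H ⧸ N => (q.out : G), Set.finite_range _, ?_, ?_⟩
  · rintro _ ⟨q, rfl⟩
    exact q.out.2
  · intro k hk
    refine ⟨_, ⟨((⟨k, hk⟩ : H) : H ⧸ N), rfl⟩, ?_⟩
    refine ⟨((((⟨k, hk⟩ : H) : H ⧸ N)).out)⁻¹ * ⟨k, hk⟩, ?_, rfl⟩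
    rw [SetLike.mem_coe, ← QuotientGroup.eq]
    exact Quotient.out_eq' _

lemma char_normalizer {H : Subgroup G} (N : Subgroup H) [hN : N.Characteristic] :
    Subgroup.normalizer (H : Set G) ≤ Subgroup.normalizer ((N.map H.subtype : Subgroup G) : Set G) := by
  have key : ∀ x ∈ Subgroup.normalizer (H : Set G), ∀ n ∈ N.map H.subtype,
      x * n * x⁻¹ ∈ N.map H.subtype := by
    rintro x hx _ ⟨n, hn, rfl⟩
    have h1 := (Subgroup.characteristic_iff_le_comap.1 hN)
      (H.normalizerMonoidHom ⟨x, hx⟩) hn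
    exact ⟨_, h1, rfl⟩
  intro x hx
  rw [Subgroup.mem_normalizer_iff]
  intro n
  refine ⟨key x hx n, fun h => ?_⟩
  have := key x⁻¹ (inv_mem hx) _ h
  simpa [mul_assoc] using this

variable {V : Type*} [AddCommGroup V] [Module ℂ V]

def lineStab (ρ : G →* Module.End ℂ V) (w : V) (hw : w ≠ 0) : Subgroup G where
  carrier := {g | ∃ c : ℂ, ρ g w = c • w}
  one_mem' := ⟨1, by simp⟩
  mul_mem' := by
    rintro a b ⟨c, hc⟩ ⟨d, hd⟩
    exact ⟨d * c, by rw [map_mul, Module.End.mul_apply, hd, map_smul, hc, smul_smul]⟩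
  inv_mem' := by
    rintro a ⟨c, hc⟩
    have h1 : ρ a⁻¹ (ρ a w) = w := by
      rw [← Module.End.mul_apply, ← map_mul]; simp
    have hc0 : c ≠ 0 := by
      rintro rfl
      rw [hc] at h1
      simp at h1
      exact hw h1.symm
    refine ⟨c⁻¹, ?_⟩
    rw [hc, map_smul] at h1
    rw [← h1, smul_smul, inv_mul_cancel₀ hc0, one_smul, h1]

lemma exists_chi (ρ : G →* Module.End ℂ V) (w : V) (hw : w ≠ 0) (H : Subgroup G)
    (hH : H ≤ lineStab ρ w hw) : ∃ χ : H →* ℂ, ∀ h : H, ρ h w = χ h • w := by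
  have hH' : ∀ h : H, ∃ c : ℂ, ρ h w = c • w := fun h => hH h.2
  choose c hc using hH'
  have inj := smul_left_injective ℂ hw
  refine ⟨{ toFun := c, map_one' := ?_, map_mul' := ?_ }, hc⟩
  · apply inj
    show c 1 • w = (1 : ℂ) • w
    rw [← hc]; simp
  · intro a b
    apply inj
    show c (a * b) • w = (c a * c b) • w
    rw [← hc, Subgroup.coe_mul, map_mul, Module.End.mul_apply, hc b, map_smul, hc a, smul_smul,
      mul_comm]

lemma chi_indep (ρ : G →* Module.End ℂ V) (H : Subgroup G) (v : ℕ → V) (hv : ∀ i, v i ≠ 0)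
    (χ : ℕ → (H →* ℂ)) (hχ : ∀ i (h : H), ρ (h : G) (v i) = χ i h • v i)
    (hinj : Function.Injective χ) : LinearIndependent ℂ v := by
  rw [linearIndependent_iff']
  intro s c hs i hi
  have hd := (linearIndependent_monoidHom H ℂ).comp χ hinj
  obtain ⟨l, hl⟩ : ∃ l : Module.Dual ℂ V, l (v i) ≠ 0 := by
    by_contra! h
    exact hv i ((Module.forall_dual_apply_eq_zero_iff ℂ (v i)).1 h)
  rw [linearIndependent_iff'] at hd
  have := hd s (fun j => c j * l (v j)) (by
    funext h
    have e := congrArg (fun w => l (ρ (h : G) w)) hs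
    simp only [map_sum, map_smul, hχ, map_zero, smul_eq_mul] at e
    simp only [Finset.sum_apply, Pi.smul_apply, smul_eq_mul, Pi.zero_apply, Function.comp]
    rw [← e]
    refine Finset.sum_congr rfl fun j _ => ?_
    ring) i hi
  exact (mul_eq_zero.1 this).resolve_right hl

lemma lie_kolchin [FiniteDimensional ℂ V] [Nontrivial V] (ρ : G →* Module.End ℂ V)
    {K : Subgroup G} (hK : PC K) : ∃ K1 ≤ K, ∃ T : Set G, T.Finite ∧
      (∀ k ∈ K, ∃ t ∈ T, t⁻¹ * k ∈ K1) ∧ ∃ (v : V) (hv : v ≠ 0), K1 ≤ lineStab ρ v hv := by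
  induction hK with
  | bot =>
    obtain ⟨v, hv⟩ := exists_ne (0 : V)
    exact ⟨⊥, le_rfl, {1}, Set.finite_singleton _, fun k hk => ⟨1, rfl, by simpa using hk⟩,
      v, hv, bot_le⟩
  | step H x hH hx ih =>
    obtain ⟨H1, hH1, T, hT, hcov, v, hv, hst⟩ := ih
    have := cover_fi T hT hcov
    have : Group.FG H := (Group.fg_iff_subgroup_fg H).2 (pc_fg hH H le_rfl)
    obtain ⟨N, hN1, hN2, hN3⟩ := exists_char (H1.subgroupOf H)
    have hxN : x ∈ Subgroup.normalizer ((N.map H.subtype : Subgroup G) : Set G) :=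
      char_normalizer N hx
    obtain ⟨T2, hT2, hT2H, hcov2⟩ := fi_cover N
    have hH2H : N.map H.subtype ≤ H := Subgroup.map_subtype_le N
    have hH21 : N.map H.subtype ≤ H1 := by
      rintro _ ⟨n, hn, rfl⟩
      exact hN1 hn
    generalize N.map H.subtype = H2 at *
    have hcancel : ∀ (g : G) (w : V), ρ g⁻¹ (ρ g w) = w := fun g w => by
      rw [← Module.End.mul_apply, ← map_mul]; simp
    have hne : ∀ (g : G) (w : V), w ≠ 0 → ρ g w ≠ 0 := by
      intro g w hw h
      apply hw
      rw [← hcancel g w, h, map_zero]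
    have hcomm : ∀ (g h : G) (w : V), ρ h (ρ g w) = ρ g (ρ (g⁻¹ * h * g) w) := by
      intro g h w
      simp only [← Module.End.mul_apply, ← map_mul]
      congr 2
      group
    have hcj : ∀ (j : ℕ) h, h ∈ H2 → (x ^ j)⁻¹ * h * x ^ j ∈ H2 := fun j h hh => by
      simpa using zpow_conj_mem' hxN j hh
    have hvi : ∀ i : ℕ, ρ (x ^ i) v ≠ 0 := fun i => hne _ _ hv
    have hex : ∀ i : ℕ, ∃ χ : H2 →* ℂ, ∀ h : H2, ρ h (ρ (x ^ i) v) = χ h • ρ (x ^ i) v := by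
      intro i
      refine exists_chi ρ _ (hvi i) H2 ?_
      intro h hh
      obtain ⟨c, hc⟩ := hst (hH21 (hcj i h hh))
      exact ⟨c, by rw [hcomm, hc, map_smul]⟩
    choose χ hχ using hex
    obtain ⟨i, j, hij, hχij⟩ : ∃ i j, i < j ∧ χ i = χ j := by
      by_contra! hcon
      have hinj : Function.Injective χ := by
        intro i j e
        rcases lt_trichotomy i j with h | h | h
        · exact absurd e (hcon i j h)
        · exact h
        · exact absurd e.symm (hcon j i h)
      have := chi_indep ρ H2 _ hvi χ hχ hinj
      exact not_finite_iff_infinite.2 (inferInstance : Infinite ℕ) this.finite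
    obtain ⟨k, hk, rfl⟩ : ∃ k, 0 < k ∧ j = k + i := ⟨j - i, by omega, by omega⟩
    have hxv : ρ (x ^ (k + i)) v = ρ (x ^ k) (ρ (x ^ i) v) := by
      rw [pow_add, map_mul, Module.End.mul_apply]
    have hchi : ∀ h (hh : h ∈ H2), χ i ⟨_, hcj k h hh⟩ = χ i ⟨h, hh⟩ := by
      intro h hh
      apply smul_left_injective ℂ (hvi (k + i))
      show χ i _ • _ = χ i _ • _
      have e1 := hχ (k + i) ⟨h, hh⟩
      have e2 := hχ i ⟨_, hcj k h hh⟩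
      rw [← hχij, hxv, hcomm (x ^ k)] at e1
      rw [hxv, ← e1, ← map_smul]
      exact congrArg _ e2.symm
    let W : Submodule ℂ V :=
      { carrier := {w | ∀ h : H2, ρ h w = χ i h • w}
        zero_mem' := by intro h; simp
        add_mem' := by
          intro a b ha hb h
          rw [map_add, ha, hb, smul_add]
        smul_mem' := by
          intro c a ha h
          rw [map_smul, ha, smul_comm] }
    have hWx : ∀ w ∈ W, ρ (x ^ k) w ∈ W := by
      intro w hw h
      rw [hcomm, hw ⟨_, hcj k h h.2⟩, map_smul, hchi]
    have : Nontrivial W := ⟨⟨⟨_, hχ i⟩, 0, fun e => hvi i (congrArg Subtype.val e)⟩⟩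
    obtain ⟨c, hc⟩ := Module.End.exists_eigenvalue ((ρ (x ^ k)).restrict hWx)
    obtain ⟨w, hw⟩ := hc.exists_hasEigenvector
    have hw1 : ρ (x ^ k) (w : V) = c • (w : V) := congrArg Subtype.val hw.apply_eq_smul
    have hw0 : (w : V) ≠ 0 := fun e => hw.2 (Subtype.ext e)
    refine ⟨H2 ⊔ Subgroup.zpowers (x ^ k), ?_,
      (fun p : G × ℕ => p.1 * x ^ p.2) '' (T2 ×ˢ (Set.Iio k)), ?_, ?_, w, hw0, ?_⟩
    · refine sup_le (hH2H.trans le_sup_left) ?_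
      rw [Subgroup.zpowers_le]
      exact Subgroup.mem_sup_right ⟨k, by simp⟩
    · exact (hT2.prod (Set.finite_Iio k)).image _
    · intro g hg
      obtain ⟨h, hh, q, rfl⟩ := (mem_step hx).1 hg
      obtain ⟨t, ht, hth⟩ := hcov2 h hh
      obtain ⟨r, hr⟩ := Int.eq_ofNat_of_zero_le (Int.emod_nonneg q (b := k) (by omega))
      have hr' := Int.emod_lt_of_pos q (b := k) (by omega)
      have hq := Int.mul_ediv_add_emod q k
      refine ⟨t * x ^ r, ⟨(t, r), ⟨ht, ?_⟩, rfl⟩, ?_⟩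
      · show r < k
        omega
      · have e : (t * x ^ r)⁻¹ * (h * x ^ q) =
            ((x ^ r)⁻¹ * (t⁻¹ * h) * x ^ r) * (x ^ k) ^ (q / k) := by
          rw [← zpow_natCast x k, ← zpow_mul]
          nth_rewrite 1 [← hq]
          rw [hr, add_comm, zpow_add, zpow_natCast]
          group
        rw [e]
        exact mul_mem (Subgroup.mem_sup_left (hcj r _ hth)) (Subgroup.mem_sup_right ⟨_, rfl⟩)
    · refine sup_le (fun h hh => ⟨_, w.2 ⟨h, hh⟩⟩) ?_
      rw [Subgroup.zpowers_le]
      exact ⟨c, hw1⟩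

lemma lie_kolchin_top [FiniteDimensional ℂ V] [Nontrivial V] (ρ : G →* Module.End ℂ V)
    (hK : PC (⊤ : Subgroup G)) : ∃ G1 : Subgroup G, G1.Normal ∧ G1.FiniteIndex ∧
      ∃ v : V, v ≠ 0 ∧ ∀ g ∈ G1, ∀ h ∈ G1, ρ (g * h) v = ρ (h * g) v := by
  obtain ⟨K1, -, T, hT, hcov, v, hv, hst⟩ := lie_kolchin ρ hK
  have h1 := cover_fi T hT hcov
  have h2 : K1.FiniteIndex := by
    constructor
    have := h1.index_ne_zero
    rwa [← Subgroup.relIndex, Subgroup.relIndex_top_right] at this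
  refine ⟨K1.normalCore, inferInstance, inferInstance, v, hv, ?_⟩
  intro g hg h hh
  obtain ⟨c, hc⟩ := hst (K1.normalCore_le hg)
  obtain ⟨d, hd⟩ := hst (K1.normalCore_le hh)
  rw [map_mul, map_mul, Module.End.mul_apply, Module.End.mul_apply, hc, hd, map_smul, map_smul,
    hc, hd, smul_smul, smul_smul, mul_comm]

/-- Integral form. -/
lemma lie_kolchin_int {A : Type*} [AddCommGroup A] [Module.Finite ℤ A] [Module.Free ℤ A]
    [Nontrivial A] (ρ : G →* Module.End ℤ A)
    (hK : PC (⊤ : Subgroup G)) : ∃ G1 : Subgroup G, G1.Normal ∧ G1.FiniteIndex ∧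
      ∃ v : A, v ≠ 0 ∧ ∀ g ∈ G1, ∀ h ∈ G1, ρ (g * h) v = ρ (h * g) v := by
  classical
  let ι := Module.Free.ChooseBasisIndex ℤ A
  let b : Module.Basis ι ℤ A := Module.Free.chooseBasis ℤ A
  have : Nonempty ι := b.index_nonempty
  let M : G →* Matrix ι ι ℤ := ((LinearMap.toMatrixAlgEquiv b : _ ≃ₐ[ℤ] _) : _ →* _).comp ρ
  let ρ' : G →* Module.End ℂ (ι → ℂ) :=
    ((Matrix.toLinAlgEquiv' : Matrix ι ι ℂ ≃ₐ[ℂ] _) : _ →* _).comp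
      ((RingHom.mapMatrix (Int.castRingHom ℂ) : Matrix ι ι ℤ →+* Matrix ι ι ℂ).toMonoidHom.comp M)
  obtain ⟨G1, hn, hf, v, hv, hvG⟩ := lie_kolchin_top ρ' hK
  refine ⟨G1, hn, hf, ?_⟩
  have hρ' : ∀ g (w : ι → ℂ) i, ρ' g w i = ∑ j, (M g i j : ℂ) * w j := by
    intro g w i
    rfl
  obtain ⟨i0, hi0⟩ := Function.ne_iff.1 hv
  obtain ⟨l, hl⟩ : ∃ l : Module.Dual ℚ ℂ, l (v i0) ≠ 0 := by
    by_contra! h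
    exact hi0 ((Module.forall_dual_apply_eq_zero_iff ℚ (v i0)).1 h)
  obtain ⟨d, hd⟩ := IsLocalization.exist_integer_multiples_of_finite (nonZeroDivisors ℤ)
    (fun i => l (v i))
  choose a ha using hd
  have hd0 : ((d : ℤ) : ℚ) ≠ 0 := by
    exact_mod_cast nonZeroDivisors.ne_zero d.2
  have ha' : ∀ i, (a i : ℚ) = (d : ℤ) * l (v i) := by
    intro i
    have := ha i
    simpa using this
  have hcoef : ∀ g i, ((∑ j, M g i j * a j : ℤ) : ℚ) = (d : ℤ) * l (ρ' g v i) := by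
    intro g i
    rw [hρ', map_sum, Finset.mul_sum]
    push_cast
    refine Finset.sum_congr rfl fun j _ => ?_
    have : (M g i j : ℂ) * v j = (M g i j : ℚ) • v j := by
      rw [Rat.smul_def]; push_cast; rfl
    rw [ha', this, map_smul, smul_eq_mul]
    ring
  have hM : ∀ g i, b.repr (ρ g (b.equivFun.symm a)) i = ∑ j, M g i j * a j := by
    intro g i
    have := LinearMap.toMatrix_mulVec_repr b b (ρ g) (b.equivFun.symm a)
    have h2 := congrFun this i
    rw [← h2]
    simp only [Matrix.mulVec, dotProduct]
    refine Finset.sum_congr rfl fun j _ => ?_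
    congr 1
    exact congrFun (b.equivFun.apply_symm_apply a) j
  refine ⟨b.equivFun.symm a, ?_, ?_⟩
  · intro e
    have : a = 0 := (LinearEquiv.map_eq_zero_iff _).1 e
    have h2 := ha' i0
    rw [this] at h2
    simp only [Pi.zero_apply, Int.cast_zero] at h2
    exact (mul_ne_zero hd0 hl) h2.symm
  · intro g hg h hh
    apply b.repr.injective
    ext i
    rw [hM, hM]
    have : ((∑ j, M (g * h) i j * a j : ℤ) : ℚ) = ((∑ j, M (h * g) i j * a j : ℤ) : ℚ) := by
      rw [hcoef, hcoef, hvG g hg h hh]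
    exact_mod_cast this

end
end CS
end

section
namespace CS

section
universe u
variable {G : Type u} [Group G] {B : Type u} [AddCommGroup B]

structure Emb (G B : Type*) [Group G] [AddCommGroup B] where
  ι : B → G
  add : ∀ a b, ι (a + b) = ι a * ι b
  inj : Function.Injective ι
  nrm : ∀ g b, ∃ b', ι b' = g * ι b * g⁻¹

namespace Emb
variable (E : Emb G B)

lemma zero : E.ι 0 = 1 := by
  have := E.add 0 0
  rw [add_zero] at this
  exact (mul_eq_left.1 this.symm)

lemma neg (a : B) : E.ι (-a) = (E.ι a)⁻¹ := by
  rw [eq_inv_iff_mul_eq_one, ← E.add, neg_add_cancel, E.zero]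

lemma exists_rho : ∃ ρ : G →* Module.End ℤ B, ∀ g b, E.ι (ρ g b) = g * E.ι b * g⁻¹ := by
  have h := E.nrm
  choose r hr using h
  refine ⟨{ toFun := fun g => AddMonoidHom.toIntLinearMap
              { toFun := r g, map_zero' := ?_, map_add' := ?_ }
            map_one' := ?_, map_mul' := ?_ }, hr⟩
  · apply E.inj; rw [hr, E.zero]; simp
  · intro a b
    apply E.inj; rw [hr, E.add, E.add, hr, hr]; group
  · ext b
    apply E.inj
    show E.ι (r 1 b) = E.ι b
    rw [hr]; simp
  · intro g h
    ext b
    apply E.inj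
    show E.ι (r (g * h) b) = E.ι (r g (r h b))
    rw [hr, hr, hr]; group

end Emb

lemma exists_commring {C : Type*} [Group C] (ρ : C →* Module.End ℤ B)
    (hc : ∀ g h, ρ (g * h) = ρ (h * g)) :
    ∃ (R : Type u) (_ : CommRing R) (j : R →+* Module.End ℤ B), Function.Injective j ∧
      ∀ T, T ∈ Subring.closure (Set.range ρ) ↔ ∃ r, j r = T := by
  have hcomm : ∀ x ∈ Set.range ρ, ∀ y ∈ Set.range ρ, x * y = y * x := by
    rintro _ ⟨g, rfl⟩ _ ⟨h, rfl⟩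
    rw [← map_mul, hc, map_mul]
  have hm := Subring.isMulCommutative_closure hcomm
  refine ⟨Subring.closure (Set.range ρ),
    { (Subring.closure (Set.range ρ)).toRing with mul_comm := fun a b => hm.is_comm.comm a b },
    (Subring.closure (Set.range ρ)).subtype, Subtype.val_injective, ?_⟩
  intro T
  exact ⟨fun h => ⟨⟨T, h⟩, rfl⟩, by rintro ⟨r, rfl⟩; exact r.2⟩

lemma mem_closure_range {C : Type*} [Group C] (ρ : C →* Module.End ℤ B) {T : Module.End ℤ B}
    (hT : T ∈ Subring.closure (Set.range ρ)) : T ∈ AddSubgroup.closure (Set.range ρ) := by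
  rw [Subring.mem_closure_iff] at hT
  have : (Submonoid.closure (Set.range ρ) : Set (Module.End ℤ B)) = Set.range ρ := by
    rw [← MonoidHom.coe_mrange, Submonoid.closure_eq]
  rwa [this] at hT

lemma finite_of_inj [Module.Finite ℤ B] [Module.Free ℤ B] {R : Type*} [CommRing R]
    (j : R →+* Module.End ℤ B) (hj : Function.Injective j) : Module.Finite ℤ R :=
  Module.Finite.of_injective j.toAddMonoidHom.toIntLinearMap hj

/-- Part A -/
lemma conj_of_approx [Module.Finite ℤ B] [Module.Free ℤ B] (E : Emb G B)
    (ρ : G →* Module.End ℤ B) (hρ : ∀ g b, E.ι (ρ g b) = g * E.ι b * g⁻¹)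
    (G1 : Subgroup G) [G1.FiniteIndex] (hcomm : ∀ g ∈ G1, ∀ h ∈ G1, ρ (g * h) = ρ (h * g))
    (hnil : ∀ T ∈ Subring.closure (ρ '' G1), IsNilpotent T → T = 0)
    (x : G) (a : B)
    (h : ∀ m : ℕ, 0 < m → ∃ (g : G) (b : B), E.ι a * x = E.ι (m • b) * (g * x * g⁻¹)) :
    ∃ g : G, E.ι a * x = g * x * g⁻¹ := by
  let C : Subgroup G :=
    { carrier := {g | ∃ b, E.ι b = g * x * g⁻¹ * x⁻¹}
      one_mem' := ⟨0, by rw [E.zero]; group⟩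
      mul_mem' := by
        rintro g k ⟨b, hb⟩ ⟨d, hd⟩
        refine ⟨ρ g d + b, ?_⟩
        rw [E.add, hρ, hb, hd]; group
      inv_mem' := by
        rintro g ⟨b, hb⟩
        refine ⟨ρ g⁻¹ (-b), ?_⟩
        rw [hρ, E.neg, hb]; group }
  have hC : ∀ c : C, ∃ b, E.ι b = c * x * (c : G)⁻¹ * x⁻¹ := fun c => c.2
  choose δ hδ using hC
  have hδ' : ∀ g k : C, δ (g * k) = δ g + ρ g (δ k) := by
    intro g k
    rw [add_comm]
    apply E.inj
    rw [E.add, hρ, hδ, hδ, hδ, Subgroup.coe_mul]; group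
  let ρC : C →* (Module.End ℤ B)ˣ := (ρ.comp C.subtype).toHomUnits
  have main : ∃ c, δ c = a := by
    refine fin_index ρC δ hδ' (G1.subgroupOf C) ?_ a ?_
    · intro a ha
      let ρ2 : G1.subgroupOf C →* Module.End ℤ B :=
        (ρ.comp C.subtype).comp (G1.subgroupOf C).subtype
      obtain ⟨R, _, j, hj, hjr⟩ := exists_commring ρ2 (fun g k => hcomm _ g.2 _ k.2)
      letI : Module R B := Module.compHom B j
      have hsm : ∀ (r : R) (b : B), r • b = j r b := fun r b => rfl
      have := finite_of_inj j hj
      have : IsReduced R := by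
        constructor
        intro r hr
        apply hj
        rw [map_zero]
        refine hnil _ ?_ (hr.map j)
        refine Subring.closure_mono ?_ ((hjr (j r)).2 ⟨r, rfl⟩)
        rintro _ ⟨c, rfl⟩
        exact ⟨_, c.2, rfl⟩
      have hex : ∀ c, ∃ r, j r = ρ2 c := fun c =>
        (hjr _).1 (Subring.subset_closure ⟨c, rfl⟩)
      choose p hp using hex
      let ρ3 : G1.subgroupOf C →* R :=
        { toFun := p
          map_one' := by apply hj; rw [hp]; simp
          map_mul' := by intro g k; apply hj; rw [hp, map_mul, map_mul, hp, hp] }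
      obtain ⟨c, hc⟩ := lemma_star (R := R) ρ3.toHomUnits (by
          rw [eq_top_iff]
          intro r _
          have h1 := mem_closure_range ρ2 ((hjr (j r)).2 ⟨r, rfl⟩)
          have h2 : Set.range ρ2 = j.toAddMonoidHom '' (Set.range fun c => (ρ3.toHomUnits c : R)) := by
            rw [← Set.range_comp]
            congr 1
            funext c
            exact (hp c).symm
          rw [h2, ← AddMonoidHom.map_closure] at h1
          obtain ⟨r', hr', e⟩ := h1
          rwa [hj e] at hr') (fun c => δ c) (by
          intro g k
          rw [hsm]
          show δ (g * k : C) = _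
          rw [hδ']
          congr 1
          exact (congrArg (fun T : Module.End ℤ B => T (δ k)) (hp g)).symm) a (by
          intro m hm
          obtain ⟨c, hc, z, hz⟩ := ha m hm
          exact ⟨⟨c, hc⟩, z, hz⟩)
      exact ⟨c, hc⟩
    · intro m hm
      obtain ⟨g, b, hg⟩ := h m hm
      have e : E.ι (a - m • b) = g * x * g⁻¹ * x⁻¹ := by
        rw [sub_eq_add_neg, add_comm, E.add, E.neg, eq_mul_inv_iff_mul_eq, mul_assoc, hg]
        group
      refine ⟨⟨g, _, e⟩, b, ?_⟩
      have : δ ⟨g, _, e⟩ = a - m • b := by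
        apply E.inj
        rw [hδ, e]
      rw [this]; abel
  obtain ⟨c, rfl⟩ := main
  refine ⟨c, ?_⟩
  rw [hδ]; group

/-- Part B -/
lemma exists_G1 [Module.Finite ℤ B] [Module.Free ℤ B] [Nontrivial B]
    (hG : PC (⊤ : Subgroup G)) (ρ : G →* Module.End ℤ B)
    (hmin : ∀ D : Submodule ℤ B, D ≠ ⊥ → (∀ g, ∀ d ∈ D, ρ g d ∈ D) → ∀ b, ∃ n : ℤ, n ≠ 0 ∧ n • b ∈ D) :
    ∃ G1 : Subgroup G, G1.FiniteIndex ∧ (∀ g ∈ G1, ∀ h ∈ G1, ρ (g * h) = ρ (h * g)) ∧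
      ∀ T ∈ Subring.closure (ρ '' G1), IsNilpotent T → T = 0 := by
  obtain ⟨G1, hn, hf, v, hv, hvG⟩ := lie_kolchin_int ρ hG
  have happ : ∀ (g h : G) (b : B), ρ (g * h) b = ρ g (ρ h b) := fun g h b => by
    rw [map_mul, Module.End.mul_apply]
  have hcomm : ∀ g ∈ G1, ∀ h ∈ G1, ρ (g * h) = ρ (h * g) := by
    let D : Submodule ℤ B :=
      { carrier := {b | ∀ g ∈ G1, ∀ h ∈ G1, ρ (g * h) b = ρ (h * g) b}
        zero_mem' := by intro g _ h _; simp
        add_mem' := by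
          intro a b ha hb g hg h hh
          rw [map_add, map_add, ha g hg h hh, hb g hg h hh]
        smul_mem' := by
          intro c a ha g hg h hh
          rw [map_smul, map_smul, ha g hg h hh] }
    have hD : D ≠ ⊥ := by
      intro e
      have : v ∈ D := hvG
      rw [e] at this
      exact hv this
    intro g hg h hh
    ext b
    obtain ⟨n, hn0, hnb⟩ := hmin D hD (by
      intro k d hd g hg h hh
      have h1 := hd _ (hn.conj_mem g hg k⁻¹) _ (hn.conj_mem h hh k⁻¹)
      have h2 := congrArg (ρ k) h1
      rw [← happ, ← happ] at h2
      rw [← happ, ← happ]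
      convert h2 using 3 <;> group) b
    have := hnb g hg h hh
    rw [map_smul, map_smul] at this
    exact smul_right_injective B hn0 this
  refine ⟨G1, hf, hcomm, ?_⟩
  let ρ2 : G1 →* Module.End ℤ B := ρ.comp G1.subtype
  have hr2 : Set.range ρ2 = ρ '' G1 := by
    ext T
    constructor
    · rintro ⟨g, rfl⟩
      exact ⟨g, g.2, rfl⟩
    · rintro ⟨g, hg, rfl⟩
      exact ⟨⟨g, hg⟩, rfl⟩
  obtain ⟨R, _, j, hj, hjr⟩ := exists_commring ρ2 (fun g k => hcomm _ g.2 _ k.2)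
  rw [hr2] at hjr
  letI : Module R B := Module.compHom B j
  have hsm : ∀ (r : R) (b : B), r • b = j r b := fun r b => rfl
  have := finite_of_inj j hj
  have : IsNoetherianRing R := isNoetherian_of_tower ℤ inferInstance
  obtain ⟨a, ha0, ha⟩ : ∃ a : B, a ≠ 0 ∧ ∀ r : R, IsNilpotent r → j r a = 0 := by
    classical
    have hex : ∃ n, nilradical R ^ n • (⊤ : Submodule R B) = ⊥ := by
      obtain ⟨n, hn⟩ := IsNoetherianRing.isNilpotent_nilradical R
      exact ⟨n, by rw [hn]; simp⟩
    have hs := Nat.find_spec hex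
    rcases hk : Nat.find hex with _ | m
    · rw [hk, pow_zero] at hs
      simp at hs
    · have hm := Nat.find_min hex (m := m) (by omega)
      obtain ⟨a, ha, ha0⟩ := (Submodule.ne_bot_iff _).1 hm
      refine ⟨a, ha0, fun r hr => ?_⟩
      rw [hk, pow_succ', mul_smul] at hs
      have := Submodule.smul_mem_smul (I := nilradical R) hr ha
      rw [hs] at this
      exact this
  have hconj : ∀ (k : G) (T : Module.End ℤ B), T ∈ Subring.closure (ρ '' G1) →
      ρ k⁻¹ * T * ρ k ∈ Subring.closure (ρ '' G1) := by
    intro k T hT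
    have hk1 : ρ k * ρ k⁻¹ = 1 := by rw [← map_mul]; simp
    have hk2 : ρ k⁻¹ * ρ k = 1 := by rw [← map_mul]; simp
    induction hT using Subring.closure_induction with
    | mem T hT =>
      obtain ⟨g, hg, rfl⟩ := hT
      apply Subring.subset_closure
      refine ⟨k⁻¹ * g * k, ?_, by simp⟩
      simpa using hn.conj_mem g hg k⁻¹
    | zero => simp
    | one => rw [mul_one, hk2]; exact one_mem _
    | add x y _ _ hx hy => rw [mul_add, add_mul]; exact add_mem hx hy
    | neg x _ hx => rw [mul_neg, neg_mul]; exact neg_mem hx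
    | mul x y _ _ hx hy =>
      have : ρ k⁻¹ * (x * y) * ρ k = (ρ k⁻¹ * x * ρ k) * (ρ k⁻¹ * y * ρ k) := by
        calc ρ k⁻¹ * (x * y) * ρ k = ρ k⁻¹ * x * 1 * y * ρ k := by noncomm_ring
          _ = _ := by rw [← hk1]; noncomm_ring
      rw [this]
      exact mul_mem hx hy
  have hnilconj : ∀ (k : G) (T : Module.End ℤ B), IsNilpotent T →
      IsNilpotent (ρ k⁻¹ * T * ρ k) := by
    rintro k T ⟨n, hn⟩
    have hk1 : ρ k * ρ k⁻¹ = 1 := by rw [← map_mul]; simp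
    have hk2 : ρ k⁻¹ * ρ k = 1 := by rw [← map_mul]; simp
    refine ⟨n, ?_⟩
    have : ∀ n : ℕ, (ρ k⁻¹ * T * ρ k) ^ n = ρ k⁻¹ * T ^ n * ρ k := by
      intro n
      induction n with
      | zero => simp [hk2]
      | succ n ih =>
        rw [pow_succ, ih, pow_succ]
        calc _ = ρ k⁻¹ * T ^ n * (ρ k * ρ k⁻¹) * T * ρ k := by noncomm_ring
          _ = _ := by rw [hk1]; noncomm_ring
    rw [this, hn]; simp
  let D : Submodule ℤ B :=
    { carrier := {b | ∀ T ∈ Subring.closure (ρ '' G1), IsNilpotent T → T b = 0}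
      zero_mem' := by intro T _ _; simp
      add_mem' := by
        intro a b ha hb T h1 h2
        rw [map_add, ha T h1 h2, hb T h1 h2, add_zero]
      smul_mem' := by
        intro c a ha T h1 h2
        rw [map_smul, ha T h1 h2, smul_zero] }
  have hD : D ≠ ⊥ := by
    intro e
    have : a ∈ D := by
      intro T h1 h2
      obtain ⟨r, rfl⟩ := (hjr T).1 h1
      exact ha r ((IsNilpotent.map_iff hj).1 h2)
    rw [e] at this
    exact ha0 this
  intro T h1 h2
  ext b
  obtain ⟨n, hn0, hnb⟩ := hmin D hD (by
    intro k d hd T h1 h2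
    have e := hd _ (hconj k T h1) (hnilconj k T h2)
    have e2 := congrArg (ρ k) e
    rw [Module.End.mul_apply, Module.End.mul_apply, ← happ, map_zero] at e2
    simpa using e2) b
  have := hnb T h1 h2
  rw [map_smul] at this
  exact (smul_eq_zero.1 this).resolve_left hn0

end
end CS
end

section
namespace CS

section
universe u
open scoped IsMulCommutative
variable {G : Type u} [Group G]

lemma exists_inf_term (hG : PC (⊤ : Subgroup G)) [Infinite G] :
    ∃ K : Subgroup G, K.Normal ∧ Infinite K ∧ Finite (⁅K, K⁆ : Subgroup G) := by
  classical
  obtain ⟨n, hn⟩ := pc_derived hG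
  have hex : ∃ n, Finite (derivedSeries G n) := ⟨n, by rw [hn]; infer_instance⟩
  have hs := Nat.find_spec hex
  rcases hk : Nat.find hex with _ | m
  · rw [hk, derivedSeries_zero] at hs
    have : Finite G := Finite.of_equiv _ Subgroup.topEquiv.toEquiv
    exact absurd this (not_finite_iff_infinite.2 inferInstance)
  · have hm := Nat.find_min hex (m := m) (by omega)
    rw [hk, derivedSeries_succ] at hs
    exact ⟨derivedSeries G m, inferInstance, not_finite_iff_infinite.1 hm, hs⟩

/-- Part C1 -/
lemma exists_emb (hG : PC (⊤ : Subgroup G)) [Infinite G] :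
    ∃ (B : Type u) (_ : AddCommGroup B) (_ : Module.Finite ℤ B) (_ : Module.Free ℤ B)
      (_ : Nontrivial B), Nonempty (Emb G B) := by
  obtain ⟨K, hn, hinf, hfin⟩ := exists_inf_term hG
  have : Group.FG K := (Group.fg_iff_subgroup_fg K).2 (pc_fg hG K le_top)
  have : Finite (commutatorSet K) := by
    refine Finite.of_injective
      (fun c : commutatorSet K => (⟨(c : K), ?_⟩ : (⁅K, K⁆ : Subgroup G))) ?_
    · obtain ⟨c, a, b, rfl⟩ := c
      exact Subgroup.commutator_mem_commutator a.2 b.2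
    · intro a b h
      have h2 := congrArg Subtype.val h
      exact Subtype.ext (Subtype.ext h2)
  have hci : (Subgroup.center K).FiniteIndex := inferInstance
  have hcfg : Group.FG (Subgroup.center K) := inferInstance
  have hcinf : Infinite (Subgroup.center K) := by
    by_contra h
    rw [not_infinite_iff_finite] at h
    have h2 : Finite (K ⧸ Subgroup.center K) := Subgroup.finite_quotient_of_finiteIndex
    have : Finite K := Finite.of_equiv _ (Subgroup.groupEquivQuotientProdSubgroup (s := Subgroup.center K)).symm
    exact absurd this (not_finite_iff_infinite.2 inferInstance)
  have : AddGroup.FG (Additive (Subgroup.center K)) := inferInstance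
  have hMF : Module.Finite ℤ (Additive (Subgroup.center K)) := Module.Finite.iff_addGroup_fg.2 this
  obtain ⟨e, he, hte⟩ := fg_add_torsion (Additive (Subgroup.center K))
  let B : Submodule ℤ (Additive (Subgroup.center K)) :=
    LinearMap.range (LinearMap.lsmul ℤ (Additive (Subgroup.center K)) (e : ℤ))
  have hB : ∀ b, b ∈ B ↔ ∃ a, e • a = b := by
    intro b
    simp [B]
  have htf : Module.IsTorsionFree ℤ B := by
    rw [Module.isTorsionFree_int_iff_isAddTorsionFree]
    constructor
    intro n hn0 a b hab
    rw [← sub_eq_zero]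
    have h1 : n • (a - b) = 0 := by rw [smul_sub, sub_eq_zero]; exact hab
    obtain ⟨z, hz⟩ := (hB _).1 (a - b).2
    apply Subtype.ext
    rw [← hz]
    refine hte (n * e) z (by positivity) ?_
    rw [mul_smul, hz]
    exact congrArg Subtype.val h1
  refine ⟨B, inferInstance, inferInstance, inferInstance, ?_, ⟨?_⟩⟩
  · by_contra hnt
    rw [not_nontrivial_iff_subsingleton] at hnt
    have : Finite (Additive (Subgroup.center K)) := by
      refine AddCommGroup.finite_of_fg_isAddTorsion _ ?_
      intro a
      rw [isOfFinAddOrder_iff_nsmul_eq_zero]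
      refine ⟨e, he, ?_⟩
      have := Subsingleton.elim (⟨e • a, (hB _).2 ⟨a, rfl⟩⟩ : B) 0
      exact congrArg Subtype.val this
    exact absurd (Finite.of_equiv _ Additive.toMul : Finite (Subgroup.center K))
      (not_finite_iff_infinite.2 hcinf)
  · refine ⟨fun b => (((Additive.toMul (b : Additive (Subgroup.center K)) : Subgroup.center K) : K) : G), ?_, ?_, ?_⟩
    · intro a b; rfl
    · intro a b h
      exact Subtype.ext (Additive.toMul.injective (Subtype.ext (Subtype.ext h)))
    · rintro g ⟨b, hb⟩
      obtain ⟨a, rfl⟩ := (hB b).1 hb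
      let z : K := (Additive.toMul a : Subgroup.center K)
      have hz : z ∈ Subgroup.center K := (Additive.toMul a : Subgroup.center K).2
      let z' : K := ⟨g * z * g⁻¹, hn.conj_mem _ z.2 g⟩
      have hz' : z' ∈ Subgroup.center K := by
        rw [Subgroup.mem_center_iff] at hz ⊢
        intro k
        have h1 := hz ⟨g⁻¹ * k * g, by simpa using hn.conj_mem _ k.2 g⁻¹⟩
        have h2 : g⁻¹ * k * g * z = z * (g⁻¹ * k * g) := congrArg Subtype.val h1
        apply Subtype.ext
        show (k : G) * (g * z * g⁻¹) = (g * z * g⁻¹) * k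
        calc (k : G) * (g * z * g⁻¹) = g * (g⁻¹ * k * g * z) * g⁻¹ := by group
          _ = _ := by rw [h2]; group
      refine ⟨⟨e • Additive.ofMul ⟨z', hz'⟩, (hB _).2 ⟨_, rfl⟩⟩, ?_⟩
      show (g * z * g⁻¹) ^ e = g * (z : G) ^ e * g⁻¹
      exact conj_pow

/-- Part C2 -/
lemma exists_min_emb (hG : PC (⊤ : Subgroup G)) [Infinite G] :
    ∃ (B : Type u) (_ : AddCommGroup B) (_ : Module.Finite ℤ B) (_ : Module.Free ℤ B)
      (_ : Nontrivial B) (E : Emb G B) (ρ : G →* Module.End ℤ B),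
      (∀ g b, E.ι (ρ g b) = g * E.ι b * g⁻¹) ∧
      (∀ D : Submodule ℤ B, D ≠ ⊥ → (∀ g, ∀ d ∈ D, ρ g d ∈ D) →
        ∀ b : B, ∃ n : ℤ, n ≠ 0 ∧ n • b ∈ D) := by
  classical
  have hex : ∃ (n : ℕ) (B : Type u) (_ : AddCommGroup B) (_ : Module.Finite ℤ B)
      (_ : Module.Free ℤ B) (_ : Nontrivial B), Nonempty (Emb G B) ∧ Module.finrank ℤ B = n := by
    obtain ⟨B, h1, h2, h3, h4, h5⟩ := exists_emb hG
    exact ⟨_, B, h1, h2, h3, h4, h5, rfl⟩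
  obtain ⟨B, h1, h2, h3, h4, ⟨E⟩, h6⟩ := Nat.find_spec hex
  obtain ⟨ρ, hρ⟩ := E.exists_rho
  refine ⟨B, h1, h2, h3, h4, E, ρ, hρ, ?_⟩
  intro D hD hinv
  have hDn : Nontrivial D := Submodule.nontrivial_iff_ne_bot.2 hD
  have hle := Nat.find_min' hex (m := Module.finrank ℤ D)
    ⟨D, inferInstance, inferInstance, inferInstance, inferInstance,
      ⟨⟨fun d => E.ι d, fun a b => E.add a b, fun a b h => Subtype.ext (E.inj h),
        fun g d => ⟨⟨_, hinv g d d.2⟩, hρ g d⟩⟩⟩, rfl⟩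
  rw [← h6] at hle
  have hq := Submodule.finrank_quotient_add_finrank D
  have hq0 : Module.finrank ℤ (B ⧸ D) = 0 := by omega
  rw [Module.finrank_eq_zero_iff] at hq0
  intro b
  obtain ⟨n, hn, hnb⟩ := hq0 (D.mkQ b)
  refine ⟨n, hn, ?_⟩
  rw [← map_smul] at hnb
  exact (Submodule.Quotient.mk_eq_zero D).1 hnb

/-- Part D -/
lemma main_step (hG : PC (⊤ : Subgroup G))
    (hquot : ∀ (M : Subgroup G) [M.Normal], M ≠ ⊥ → ConjugacySeparable (G ⧸ M)) :
    ConjugacySeparable G := by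
  intro x y hxy
  by_contra! hcon
  rcases finite_or_infinite G with hfin | hinf
  · exact hxy (hcon G inferInstance hfin (MonoidHom.id G) Function.surjective_id)
  obtain ⟨B, _, _, _, _, E, ρ, hρ, hmin⟩ := exists_min_emb hG
  obtain ⟨G1, hf, hcomm, hnil⟩ := exists_G1 hG ρ hmin
  have key : ∀ m : ℕ, 0 < m → ∃ (g : G) (b : B), y = E.ι (m • b) * (g * x * g⁻¹) := by
    intro m hm
    let M : Subgroup G :=
      { carrier := {g | ∃ b, E.ι (m • b) = g}
        one_mem' := ⟨0, by rw [smul_zero, E.zero]⟩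
        mul_mem' := by
          rintro _ _ ⟨a, rfl⟩ ⟨b, rfl⟩
          exact ⟨a + b, by rw [smul_add, E.add]⟩
        inv_mem' := by
          rintro _ ⟨a, rfl⟩
          exact ⟨-a, by rw [smul_neg, E.neg]⟩ }
    have hM : M.Normal := by
      constructor
      rintro _ ⟨a, rfl⟩ g
      exact ⟨ρ g a, by rw [← map_nsmul, hρ]⟩
    have hM0 : M ≠ ⊥ := by
      obtain ⟨b, hb⟩ := exists_ne (0 : B)
      intro e
      have h1 : E.ι (m • b) ∈ M := ⟨b, rfl⟩
      rw [e, Subgroup.mem_bot, ← E.zero] at h1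
      have h2 := E.inj h1
      rw [← natCast_zsmul] at h2
      rcases smul_eq_zero.1 h2 with h | h
      · omega
      · exact hb h
    have hc : IsConj (x : G ⧸ M) (y : G ⧸ M) := by
      by_contra hnc
      obtain ⟨Q, i1, i2, f, hf, hfc⟩ := hquot M hM0 _ _ hnc
      exact hfc (hcon Q i1 i2 (f.comp (QuotientGroup.mk' M))
        (hf.comp (QuotientGroup.mk'_surjective M)))
    obtain ⟨q, hq⟩ := isConj_iff.1 hc
    obtain ⟨g, rfl⟩ := QuotientGroup.mk_surjective q
    have h1 : ((g * x * g⁻¹ : G) : G ⧸ M) = (y : G ⧸ M) := hq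
    rw [QuotientGroup.eq] at h1
    obtain ⟨b, hb⟩ := hM.mem_comm h1
    exact ⟨g, b, by rw [hb]; group⟩
  obtain ⟨g, a, hy⟩ := key 1 one_pos
  rw [one_smul] at hy
  obtain ⟨k, hk⟩ := conj_of_approx E ρ hρ G1 hcomm hnil (g * x * g⁻¹) a (by
    intro m hm
    obtain ⟨g', b, h⟩ := key m hm
    refine ⟨g' * g⁻¹, b, ?_⟩
    rw [← hy, h]
    group)
  apply hxy
  rw [isConj_iff]
  refine ⟨k * g, ?_⟩
  rw [hy, hk]
  group

lemma cs_equiv {H : Type u} [Group H] (e : G ≃* H) (h : ConjugacySeparable G) :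
    ConjugacySeparable H := by
  intro a b hab
  obtain ⟨Q, i1, i2, f, hf, hfc⟩ := h (e.symm a) (e.symm b) (fun hc => hab (by
    obtain ⟨c, hc⟩ := isConj_iff.1 hc
    refine isConj_iff.2 ⟨e c, ?_⟩
    have := congrArg e hc
    simpa using this))
  exact ⟨Q, i1, i2, f.comp e.symm.toMonoidHom, hf.comp e.symm.surjective, hfc⟩

theorem cs_of_pc (hG : PC (⊤ : Subgroup G)) : ConjugacySeparable G := by
  have hwf : WellFoundedGT (Subgroup G) := by
    rw [wellFoundedGT_iff_monotone_chain_condition]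
    intro a
    obtain ⟨S, hS⟩ := pc_fg hG (⨆ n, a n) le_top
    have hmem : ∀ s ∈ S, ∃ n, s ∈ a n := by
      intro s hs
      have : s ∈ ⨆ n, a n := by rw [← hS]; exact Subgroup.subset_closure hs
      exact (Subgroup.mem_iSup_of_directed a.monotone.directed_le).1 this
    choose! f hf using hmem
    refine ⟨S.sup f, fun m hm => le_antisymm (a.monotone hm) ?_⟩
    refine (le_iSup (fun n => a n) m).trans ?_
    rw [← hS, Subgroup.closure_le]
    intro s hs
    exact a.monotone (Finset.le_sup hs) (hf s hs)
  have key : ∀ N : Subgroup G, ∀ _ : N.Normal, ConjugacySeparable (G ⧸ N) := by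
    intro N
    induction N using hwf.induction with
    | ind N ih =>
    intro hN
    refine main_step ?_ ?_
    · have := pc_map (QuotientGroup.mk' N) hG
      rwa [← MonoidHom.range_eq_map, MonoidHom.range_eq_top.2 (QuotientGroup.mk'_surjective N)] at this
    · intro M hM hM0
      have hlt : N < M.comap (QuotientGroup.mk' N) := by
        refine lt_of_le_of_ne ?_ ?_
        · intro n hn
          rw [Subgroup.mem_comap]
          have : QuotientGroup.mk' N n = 1 := (QuotientGroup.eq_one_iff n).2 hn
          rw [this]
          exact one_mem _
        · intro e
          apply hM0
          rw [eq_bot_iff]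
          intro q hq
          obtain ⟨g, rfl⟩ := QuotientGroup.mk_surjective q
          have : g ∈ M.comap (QuotientGroup.mk' N) := hq
          rw [← e] at this
          exact (QuotientGroup.eq_one_iff g).2 this
      have hcs := ih _ hlt inferInstance
      have hker : M.comap (QuotientGroup.mk' N) =
          ((QuotientGroup.mk' M).comp (QuotientGroup.mk' N)).ker := by
        rw [← MonoidHom.comap_ker, QuotientGroup.ker_mk']
      exact cs_equiv ((QuotientGroup.quotientMulEquivOfEq hker).trans
        (QuotientGroup.quotientKerEquivOfSurjective _
          ((QuotientGroup.mk'_surjective M).comp (QuotientGroup.mk'_surjective N)))) hcs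
  exact cs_equiv QuotientGroup.quotientBot (key ⊥ inferInstance)

end
end CS
end

/-- Remeslennikov: polycyclic groups are conjugacy separable. -/
theorem conjugacySeparable_of_isPolycyclic (G : Type u) [Group G]
    (h : IsPolycyclic G) : ConjugacySeparable G := by
  exact CS.cs_of_pc (CS.pc_top h)
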